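/- arXiv:2506.20161 — 5 statements merged into one kernel-verified Lean document; each statement's English description precedes it below -/
import Mathlib

section
/- Let n ≥ 2 and let K be a finite subgroup of Aut(𝔽ₙ), the automorphism group of the free group of rank n. Then the restriction to K of the natural homomorphism Aut(𝔽ₙ) → Aut(𝔽ₙ^{ab}) ≅ GLₙ(ℤ) induced by abelianization is injective. -/
/-!
The point is that an automorphism `φ` of finite order of a free group `F` acting trivially on
`Fᵃᵇ` is the identity. The proof uses the Magnus expansion. Let `F` act on `ℤ`-valued functions on
words by `xᵢ ↦ 1 + Xᵢ`, where `Xᵢ` shifts a function along the letter `i`; applying `ℤ[F]` to the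
indicator `δ` of the empty word gives the Magnus expansion `ℤ[F] → ℤ⟨⟨X⟩⟩`. Let `J k ⊆ ℤ[F]` consist
of the elements whose expansion has order at least `k`. Three facts carry the argument.

* Every `a ∈ J (k + 1)` is `∑ (xᵢ - 1) cᵢ` with `cᵢ ∈ J k` (`exists_decomp`), so `J k` behaves like
  the `k`-th power of the augmentation ideal: `J j * J k ⊆ J (j + k)`. Consequently, if `φ` is
  trivial on `Fᵃᵇ`, then `φ a - a ∈ J (k + 1)` for `a ∈ J k` (`extend_sub_mem`).
* The quotient `ℤ[F] / J k` is torsion-free, by comparing coefficients.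
* If `g - 1 ∈ J k` for all `k`, then `g = 1` (`eq_one_of_magnus`): writing `g` as an alternating
  product of nonzero powers `x_{i₁}^{e₁} ⋯ x_{iᵣ}^{eᵣ}`, the coefficient of `X_{i₁} ⋯ X_{iᵣ}`
  is `e₁ ⋯ eᵣ ≠ 0`.

Suppose now that `φ ^ m = 1` with `m > 0` and that `b = φ a - a` lies in `J k`. Then `φ b ≡ b`
modulo `J (k + 1)`, so `0 = φ ^ m a - a ≡ m b`, and torsion-freeness gives `b ∈ J (k + 1)`. By
induction `b` lies in every `J k`; for `a = g ∈ F` this forces `φ g = g`.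
-/

namespace HypPaper

namespace Magnus

variable {α : Type*} [DecidableEq α]

/-! ### The action on functions on words -/

/-- Left multiplication by the variable `Xᵢ` on noncommutative power series, a power series being
encoded as its coefficient function `List α → ℤ` on words. -/
def shift (i : α) : Module.End ℤ (List α → ℤ) where
  toFun f
    | [] => 0
    | j :: w => if j = i then f w else 0
  map_add' f g := by
    funext w
    cases w with
    | nil => simp
    | cons j w => by_cases h : j = i <;> simp [h]
  map_smul' r f := by
    funext w
    cases w with
    | nil => simp
    | cons j w => by_cases h : j = i <;> simp [h]

@[simp] lemma shift_nil (i : α) (f : List α → ℤ) : shift i f [] = 0 := rfl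

@[simp] lemma shift_cons (i j : α) (f : List α → ℤ) (w : List α) :
    shift i f (j :: w) = if j = i then f w else 0 := rfl

/-- The solution `g` of `(1 + Xᵢ) g = f`, computed recursively on the length of words. -/
def unshift (i : α) (f : List α → ℤ) : List α → ℤ
  | [] => f []
  | j :: w => f (j :: w) - if j = i then unshift i f w else 0

lemma isUnit_one_add_shift (i : α) : IsUnit (1 + shift i) := by
  rw [Module.End.isUnit_iff]
  constructor
  · rw [injective_iff_map_eq_zero]
    intro f hf
    funext w
    induction w with
    | nil => simpa using congrFun hf []
    | cons j w ih =>
      have := congrFun hf (j :: w)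
      simpa [ih] using this
  · intro f
    refine ⟨unshift i f, ?_⟩
    funext w
    cases w <;> simp [unshift]

/-- The Magnus representation of the free group, sending `xᵢ` to `1 + Xᵢ`. -/
noncomputable def rep : FreeGroup α →* Module.End ℤ (List α → ℤ) :=
  (Units.coeHom _).comp (FreeGroup.lift fun i => (isUnit_one_add_shift i).unit)

lemma rep_of (i : α) : rep (FreeGroup.of i) = 1 + shift i := by
  simp [rep]

lemma rep_of_mul (i : α) (g : FreeGroup α) (f : List α → ℤ) (w : List α) :
    rep (FreeGroup.of i * g) f w = rep g f w + shift i (rep g f) w := by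
  rw [map_mul, rep_of]; rfl

/-- The constant power series `1`. -/
def delta : List α → ℤ := fun w => if w = [] then 1 else 0

lemma rep_zpow_of_head_ne (i : α) (e : ℤ) (f : List α → ℤ) (w : List α) (hw : w.head? ≠ some i) :
    rep (FreeGroup.of i ^ e) f w = f w := by
  have key (e : ℤ) : rep (FreeGroup.of i ^ (e + 1)) f w = rep (FreeGroup.of i ^ e) f w := by
    rw [add_comm, zpow_add, zpow_one, rep_of_mul]
    cases w with
    | nil => simp
    | cons j w => simp_all
  induction e using Int.induction_on with
  | zero => simp
  | succ n ih => rw [key, ih]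
  | pred n ih => rw [← ih, ← key, sub_add_cancel]

/-- If `w` does not begin with `i`, then `Xᵢ ^ 2` does not contribute to the coefficient at `i :: w`,
so there `(1 + Xᵢ) ^ e` acts as `1 + e Xᵢ`. -/
lemma rep_zpow_cons (i : α) (e : ℤ) (f : List α → ℤ) (w : List α) (hw : w.head? ≠ some i) :
    rep (FreeGroup.of i ^ e) f (i :: w) = f (i :: w) + e * f w := by
  have key (e : ℤ) : rep (FreeGroup.of i ^ (e + 1)) f (i :: w) =
      rep (FreeGroup.of i ^ e) f (i :: w) + f w := by
    rw [add_comm, zpow_add, zpow_one, rep_of_mul, shift_cons, if_pos rfl,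
      rep_zpow_of_head_ne i e f w hw]
  induction e using Int.induction_on with
  | zero => simp
  | succ n ih => rw [key, ih]; ring
  | pred n ih =>
    have := key (-n - 1)
    rw [sub_add_cancel, ih] at this
    linarith

/-! ### Faithfulness of the Magnus expansion -/

/-- `Syllables g w` says that `g = x_{i₁}^{e₁} ⋯ x_{iᵣ}^{eᵣ}` with all `eₛ ≠ 0`, where
`w = [i₁, …, iᵣ]` has no two equal neighbours. -/
inductive Syllables : FreeGroup α → List α → Prop
  | one : Syllables 1 []
  | cons (i : α) (e : ℤ) (g : FreeGroup α) (w : List α) (he : e ≠ 0) (hw : w.head? ≠ some i)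
      (h : Syllables g w) : Syllables (FreeGroup.of i ^ e * g) (i :: w)

lemma Syllables.zpow_mul (i : α) (d : ℤ) {g : FreeGroup α} {w : List α} (h : Syllables g w) :
    ∃ w', Syllables (FreeGroup.of i ^ d * g) w' := by
  by_cases hd : d = 0
  · exact ⟨w, by simpa [hd] using h⟩
  by_cases hw : w.head? = some i
  · cases h with
    | one => simp at hw
    | cons j e g w he hw' h =>
      obtain rfl : j = i := by simpa using hw
      rw [← mul_assoc, ← zpow_add]
      by_cases hde : d + e = 0
      · exact ⟨w, by simpa [hde] using h⟩
      · exact ⟨_, .cons j _ g w hde hw' h⟩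
  · exact ⟨_, .cons i d g w hd hw h⟩

lemma exists_syllables (g : FreeGroup α) : ∃ w, Syllables g w := by
  have key : ∀ (h : FreeGroup α) (w : List α), Syllables h w → ∃ w', Syllables (g * h) w' := by
    induction g using FreeGroup.induction_on with
    | C1 => exact fun h w hw => ⟨w, by simpa using hw⟩
    | of i => exact fun h w hw => by simpa using hw.zpow_mul i 1
    | inv_of i _ => exact fun h w hw => by simpa using hw.zpow_mul i (-1)
    | mul x y hx hy =>
      intro h w hw
      obtain ⟨w', hw'⟩ := hy h w hw
      rw [mul_assoc]
      exact hx _ _ hw'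
  simpa using key 1 [] .one

/-- Among words without equal neighbours, the syllable word is the unique one of maximal length
in the support of the Magnus expansion. -/
lemma Syllables.leading {g : FreeGroup α} {w : List α} (h : Syllables g w) :
    rep g delta w ≠ 0 ∧ ∀ v : List α, v.IsChain (· ≠ ·) → w.length ≤ v.length → v ≠ w →
      rep g delta v = 0 := by
  induction h with
  | one => exact ⟨by simp [delta], fun v _ _ hv => by simp [delta, hv]⟩
  | cons i e g w he hw h ih =>
    have hmul (v : List α) : rep (FreeGroup.of i ^ e * g) delta v =
        rep (FreeGroup.of i ^ e) (rep g delta) v := by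
      rw [map_mul]; rfl
    have hchain : ∀ {g : FreeGroup α} {w : List α}, Syllables g w → w.IsChain (· ≠ ·) := by
      intro g w h
      induction h with
      | one => simp
      | cons i e g w he hw h ih =>
        rw [List.isChain_cons]
        exact ⟨fun y hy hiy => hw (by rw [hiy]; exact hy), ih⟩
    refine ⟨?_, fun v hv hlen hne => ?_⟩
    · rw [hmul, rep_zpow_cons i e _ w hw, ih.2 (i :: w) (hchain (.cons i e g w he hw h))
        (by simp) (by simp), zero_add]
      exact mul_ne_zero he ih.1
    · have hlen' : w.length + 1 ≤ v.length := by simpa using hlen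
      have hv0 : rep g delta v = 0 :=
        ih.2 v hv (by omega) (by rintro rfl; omega)
      rw [hmul]
      by_cases hvi : v.head? = some i
      · obtain ⟨v', rfl⟩ : ∃ v', v = i :: v' := by
          cases v with
          | nil => simp at hvi
          | cons j v' => exact ⟨v', by simp_all⟩
        rw [List.isChain_cons] at hv
        have hv' : v'.head? ≠ some i := fun hh => hv.1 i hh rfl
        rw [rep_zpow_cons i e _ v' hv', hv0,
          ih.2 v' hv.2 (by simpa using hlen') (by rintro rfl; exact hne rfl)]
        simp
      · rw [rep_zpow_of_head_ne i e _ v hvi, hv0]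

lemma eq_one_of_magnus {g : FreeGroup α} (hg : rep g delta = delta) : g = 1 := by
  obtain ⟨w, hw⟩ := exists_syllables g
  have hne := hw.leading.1
  rw [hg] at hne
  obtain rfl : w = [] := by simpa [delta] using hne
  cases hw
  rfl

/-! ### The Magnus filtration of the group ring -/

/-- The Magnus representation extended to the integral group ring. -/
noncomputable def repAlg : MonoidAlgebra ℤ (FreeGroup α) →ₐ[ℤ] Module.End ℤ (List α → ℤ) :=
  MonoidAlgebra.lift ℤ _ _ rep

/-- The inclusion of the free group into its integral group ring. -/
noncomputable def ι : FreeGroup α →* MonoidAlgebra ℤ (FreeGroup α) := MonoidAlgebra.of ℤ _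

@[simp] lemma repAlg_ι (g : FreeGroup α) : repAlg (ι g) = rep g := MonoidAlgebra.lift_of _ _

/-- The elements of the group ring whose Magnus expansion has order at least `k`. -/
def J (k : ℕ) : AddSubgroup (MonoidAlgebra ℤ (FreeGroup α)) where
  carrier := {a | ∀ w : List α, w.length < k → repAlg a delta w = 0}
  zero_mem' := by simp
  add_mem' {a b} ha hb w hw := by simp [ha w hw, hb w hw]
  neg_mem' {a} ha w hw := by simp [ha w hw]

lemma mem_J {k : ℕ} {a : MonoidAlgebra ℤ (FreeGroup α)} :
    a ∈ J k ↔ ∀ w : List α, w.length < k → repAlg a delta w = 0 := Iff.rfl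

lemma mem_J_zero (a : MonoidAlgebra ℤ (FreeGroup α)) : a ∈ J 0 :=
  fun w hw => by simp at hw

lemma J_anti {j k : ℕ} (h : j ≤ k) {a : MonoidAlgebra ℤ (FreeGroup α)} (ha : a ∈ J k) : a ∈ J j :=
  fun w hw => ha w (by omega)

lemma mem_J_of_nsmul {m k : ℕ} (hm : 0 < m) {a : MonoidAlgebra ℤ (FreeGroup α)}
    (ha : m • a ∈ J k) : a ∈ J k := by
  intro w hw
  have := ha w hw
  simp only [map_nsmul, LinearMap.smul_apply, Pi.smul_apply, smul_eq_zero] at this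
  exact this.resolve_left hm.ne'

/-- The action of the free group does not decrease the order of a power series. -/
lemma rep_order (g : FreeGroup α) : ∀ (k : ℕ) (f : List α → ℤ),
    (∀ w : List α, w.length < k → f w = 0) → ∀ w : List α, w.length < k → rep g f w = 0 := by
  induction g using FreeGroup.induction_on with
  | C1 => simp
  | of i =>
    intro k f hf w hw
    rw [rep_of]
    cases w with
    | nil => simpa using hf [] hw
    | cons j w =>
      have h1 := hf (j :: w) hw
      have h2 := hf w (by simp at hw; omega)
      simp [h1, h2]
  | inv_of i _ =>
    intro k f hf w
    have hrec (v : List α) := rep_of_mul i (FreeGroup.of i)⁻¹ f v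
    simp only [mul_inv_cancel, map_one, Module.End.one_apply] at hrec
    induction w with
    | nil =>
      intro hw
      have := hrec []
      rw [hf [] hw] at this
      simpa using this.symm
    | cons j w ih =>
      intro hw
      have := hrec (j :: w)
      rw [hf _ hw, shift_cons, ih (by simp at hw; omega)] at this
      simpa using this.symm
  | mul x y hx hy =>
    intro k f hf
    rw [map_mul]
    exact hx k _ (hy k f hf)

lemma mul_mem_J (a : MonoidAlgebra ℤ (FreeGroup α)) {k : ℕ} {b : MonoidAlgebra ℤ (FreeGroup α)}
    (hb : b ∈ J k) : a * b ∈ J k := by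
  induction a using MonoidAlgebra.induction_on with
  | of g =>
    intro w hw
    change repAlg (ι g * b) delta w = 0
    rw [map_mul, Module.End.mul_apply, repAlg_ι]
    exact rep_order g k _ hb w hw
  | add x y hx hy => rw [add_mul]; exact add_mem hx hy
  | smul r x hx => rw [smul_mul_assoc]; exact zsmul_mem hx r

lemma repAlg_gen_mul (i : α) (c : MonoidAlgebra ℤ (FreeGroup α)) :
    repAlg ((ι (FreeGroup.of i) - 1) * c) delta = shift i (repAlg c delta) := by
  rw [map_mul, map_sub, repAlg_ι, rep_of, map_one, add_sub_cancel_left]; rfl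

lemma gen_mul_mem {k : ℕ} (i : α) {c : MonoidAlgebra ℤ (FreeGroup α)} (hc : c ∈ J k) :
    (ι (FreeGroup.of i) - 1) * c ∈ J (k + 1) := by
  intro w hw
  rw [repAlg_gen_mul]
  cases w with
  | nil => simp
  | cons j w => simp [hc w (by simpa using hw)]

lemma ι_sub_one_mem (g : FreeGroup α) : ι g - 1 ∈ J 1 := by
  have h0 : rep g delta [] = 1 := by
    induction g using FreeGroup.induction_on with
    | C1 => simp [delta]
    | of i => simp [rep_of, delta]
    | inv_of i _ =>
      have := rep_zpow_of_head_ne i (-1) delta [] (by simp)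
      simpa [delta] using this
    | mul x y hx hy =>
      have h := rep_order x 1 (rep y delta - delta) (fun w hw => by
        obtain rfl : w = [] := by simpa using hw
        simp [hy, delta]) [] (by simp)
      rw [map_sub, Pi.sub_apply, hx] at h
      rw [map_mul, Module.End.mul_apply]
      linarith
  intro w hw
  obtain rfl : w = [] := by simpa using hw
  simp [h0, delta]

/-- The extension of an endomorphism of the free group to the group ring. -/
noncomputable def extend {α : Type*} (φ : FreeGroup α →* FreeGroup α) :
    MonoidAlgebra ℤ (FreeGroup α) →ₐ[ℤ] MonoidAlgebra ℤ (FreeGroup α) :=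
  MonoidAlgebra.lift ℤ _ _ (ι.comp φ)

@[simp] lemma extend_ι {α : Type*} (φ : FreeGroup α →* FreeGroup α) (g : FreeGroup α) :
    extend φ (ι g) = ι (φ g) := MonoidAlgebra.lift_of _ _

variable [Fintype α]

/-- Modulo the right ideal generated by the `xᵢ - 1`, every element of the group ring is an integer;
that right ideal is therefore the augmentation ideal. -/
lemma exists_fox (a : MonoidAlgebra ℤ (FreeGroup α)) :
    ∃ (m : ℤ) (c : α → MonoidAlgebra ℤ (FreeGroup α)),
      a = m • 1 + ∑ i, (ι (FreeGroup.of i) - 1) * c i := by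
  induction a using MonoidAlgebra.induction_on with
  | of g =>
    refine ⟨1, ?_⟩
    rw [one_smul]
    change ∃ c : α → MonoidAlgebra ℤ (FreeGroup α),
      ι g = 1 + ∑ i, (ι (FreeGroup.of i) - 1) * c i
    induction g using FreeGroup.induction_on with
    | C1 => exact ⟨0, by simp⟩
    | of i =>
      refine ⟨Pi.single i 1, ?_⟩
      rw [Finset.sum_eq_single i] <;> simp +contextual
    | inv_of i _ =>
      refine ⟨Pi.single i (-ι (FreeGroup.of i)⁻¹), ?_⟩
      rw [Finset.sum_eq_single i]
      · rw [Pi.single_eq_same, mul_neg, sub_mul, ← map_mul]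
        simp
      · simp +contextual
      · simp
    | mul x y hx hy =>
      obtain ⟨c, hc⟩ := hx
      obtain ⟨d, hd⟩ := hy
      refine ⟨fun i => c i * ι y + d i, ?_⟩
      -- `x y - 1 = (x - 1) y + (y - 1)`
      simp only [mul_add, Finset.sum_add_distrib, ← mul_assoc, ← Finset.sum_mul]
      rw [← sub_eq_iff_eq_add'] at hc hd
      rw [← hc, ← hd, map_mul]
      noncomm_ring
  | add x y hx hy =>
    obtain ⟨m, c, hc⟩ := hx
    obtain ⟨m', d, hd⟩ := hy
    refine ⟨m + m', c + d, ?_⟩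
    simp only [Pi.add_apply, mul_add, Finset.sum_add_distrib, add_smul]
    rw [hc, hd]
    abel
  | smul r x hx =>
    obtain ⟨m, c, hc⟩ := hx
    refine ⟨r * m, r • c, ?_⟩
    simp only [Pi.smul_apply, mul_smul_comm, ← Finset.smul_sum, mul_smul, ← smul_add]
    rw [← hc]

/-- The decomposition underlying `J (k + 1) = I * J k`, where `I` is the augmentation ideal: the
coefficient of `a = ∑ (xᵢ - 1) cᵢ` at the word `i :: w` is that of `cᵢ` at `w`. -/
lemma exists_decomp {k : ℕ} {a : MonoidAlgebra ℤ (FreeGroup α)} (ha : a ∈ J (k + 1)) :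
    ∃ c : α → MonoidAlgebra ℤ (FreeGroup α), (∀ i, c i ∈ J k) ∧
      a = ∑ i, (ι (FreeGroup.of i) - 1) * c i := by
  obtain ⟨m, c, rfl⟩ := exists_fox a
  have hexp : repAlg (m • 1 + ∑ i, (ι (FreeGroup.of i) - 1) * c i) delta =
      m • delta + ∑ i, shift i (repAlg (c i) delta) := by
    rw [map_add, map_sum, LinearMap.add_apply, LinearMap.sum_apply]
    simp only [repAlg_gen_mul]
    simp
  rw [mem_J, hexp] at ha
  have hm : m = 0 := by
    have := ha [] (by simp)
    simpa [delta] using this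
  refine ⟨c, fun i w hw => ?_, by simp [hm]⟩
  have := ha (i :: w) (by simpa using hw)
  simpa [hm] using this

lemma mul_mem_J_add {j k : ℕ} {a b : MonoidAlgebra ℤ (FreeGroup α)} (ha : a ∈ J j) (hb : b ∈ J k) :
    a * b ∈ J (j + k) := by
  induction j generalizing a with
  | zero => simpa using mul_mem_J a hb
  | succ j ih =>
    obtain ⟨c, hc, rfl⟩ := exists_decomp ha
    rw [Finset.sum_mul]
    refine sum_mem fun i _ => ?_
    rw [mul_assoc, Nat.add_right_comm]
    exact gen_mul_mem i (ih (hc i))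

/-- `[g, h] - 1 = ((g - 1) (h - 1) - (h - 1) (g - 1)) g⁻¹ h⁻¹` has order at least two. -/
lemma commutator_sub_one_mem {u : FreeGroup α} (hu : u ∈ commutator (FreeGroup α)) :
    ι u - 1 ∈ J 2 := by
  have right {a : MonoidAlgebra ℤ (FreeGroup α)} (ha : a ∈ J 2) (b) : a * b ∈ J 2 :=
    mul_mem_J_add ha (mem_J_zero b)
  let S : Subgroup (FreeGroup α) :=
    { carrier := {u | ι u - 1 ∈ J 2}
      one_mem' := by simp
      mul_mem' := fun {x y} hx hy => by
        have : ι (x * y) - 1 = (ι x - 1) * ι y + (ι y - 1) := by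
          rw [map_mul]; noncomm_ring
        rw [Set.mem_ofPred_eq, this]
        exact add_mem (right hx _) hy
      inv_mem' := fun {x} hx => by
        have : ι x⁻¹ - 1 = -((ι x - 1) * ι x⁻¹) := by
          rw [sub_mul, ← map_mul]; simp
        rw [Set.mem_ofPred_eq, this]
        exact neg_mem (right hx _) }
  have hle : commutator (FreeGroup α) ≤ S := by
    rw [commutator_def, Subgroup.commutator_le]
    intro g _ h _
    have : ι (g * h * g⁻¹ * h⁻¹) - 1 =
        ((ι g - 1) * (ι h - 1) - (ι h - 1) * (ι g - 1)) * ι (g⁻¹ * h⁻¹) := by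
      have h1 : (ι g - 1) * (ι h - 1) - (ι h - 1) * (ι g - 1) = ι (g * h) - ι (h * g) := by
        rw [map_mul, map_mul]; noncomm_ring
      rw [h1, sub_mul, ← map_mul, ← map_mul]
      congr 2
      · group
      · rw [← map_one ι]; congr 1; group
    change ι (g * h * g⁻¹ * h⁻¹) - 1 ∈ J 2
    rw [this]
    exact right (sub_mem (mul_mem_J_add (ι_sub_one_mem g) (ι_sub_one_mem h))
      (mul_mem_J_add (ι_sub_one_mem h) (ι_sub_one_mem g))) _
  exact hle hu

/-! ### Endomorphisms trivial on the abelianization -/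

/-- An endomorphism that is trivial on the abelianization is trivial on every quotient
`J k / J (k + 1)`. -/
lemma extend_sub_mem {φ : FreeGroup α →* FreeGroup α}
    (hφ : ∀ g, Abelianization.of (φ g) = Abelianization.of g) {k : ℕ}
    {a : MonoidAlgebra ℤ (FreeGroup α)} (ha : a ∈ J k) : extend φ a - a ∈ J (k + 1) := by
  induction k generalizing a with
  | zero =>
    induction a using MonoidAlgebra.induction_on with
    | of g =>
      have := sub_mem (ι_sub_one_mem (φ g)) (ι_sub_one_mem g)
      rw [sub_sub_sub_cancel_right] at this
      rwa [← extend_ι] at this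
    | add x y hx hy =>
      rw [map_add, add_sub_add_comm]
      exact add_mem (hx (mem_J_zero _)) (hy (mem_J_zero _))
    | smul r x hx =>
      rw [map_smul, ← smul_sub]
      exact zsmul_mem (hx (mem_J_zero _)) r
  | succ k ih =>
    obtain ⟨c, hc, rfl⟩ := exists_decomp ha
    rw [map_sum, ← Finset.sum_sub_distrib]
    refine sum_mem fun i _ => ?_
    set x := FreeGroup.of i
    have hx : ι (φ x) - ι x ∈ J 2 := by
      have hmem : φ x * x⁻¹ ∈ commutator (FreeGroup α) := by
        rw [← Abelianization.ker_of, MonoidHom.mem_ker, map_mul, map_inv, hφ, mul_inv_cancel]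
      have := mul_mem_J_add (commutator_sub_one_mem hmem) (mem_J_zero (ι x))
      rwa [sub_mul, ← map_mul, inv_mul_cancel_right, one_mul] at this
    have hφc : extend φ (c i) ∈ J k := by
      have := add_mem (J_anti (Nat.le_succ k) (ih (hc i))) (hc i)
      rwa [sub_add_cancel] at this
    have hsplit : extend φ ((ι x - 1) * c i) - (ι x - 1) * c i =
        (ι (φ x) - ι x) * extend φ (c i) + (ι x - 1) * (extend φ (c i) - c i) := by
      rw [map_mul, map_sub, extend_ι, map_one]
      noncomm_ring
    rw [hsplit]
    refine add_mem ?_ (gen_mul_mem i (ih (hc i)))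
    have := mul_mem_J_add hx hφc
    rwa [show 2 + k = k + 1 + 1 by omega] at this

/-- An endomorphism of finite order that is trivial on the abelianization is the identity. -/
theorem eq_of_iterate {φ : FreeGroup α →* FreeGroup α}
    (hφ : ∀ g, Abelianization.of (φ g) = Abelianization.of g) {m : ℕ} (hm : 0 < m)
    (hφm : ∀ g, φ^[m] g = g) (g : FreeGroup α) : φ g = g := by
  have hiter (j : ℕ) : (extend φ)^[j] (ι g) = ι (φ^[j] g) := by
    induction j with
    | zero => rfl
    | succ j ih => rw [Function.iterate_succ_apply', ih, extend_ι, Function.iterate_succ_apply']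
  obtain ⟨b, hb⟩ : ∃ b, b = extend φ (ι g) - ι g := ⟨_, rfl⟩
  have hmem (k : ℕ) : b ∈ J k := by
    induction k with
    | zero => exact mem_J_zero _
    | succ k ih =>
      have hj (j : ℕ) : (extend φ)^[j] (ι g) - ι g - j • b ∈ J (k + 1) := by
        induction j with
        | zero => simp
        | succ j ihj =>
          -- Apply `φ` to the congruence for `j` and use `φ b ≡ b`.
          have h1 := add_mem (J_anti (Nat.le_succ _) (extend_sub_mem hφ ihj)) ihj
          have h2 := add_mem h1 (nsmul_mem (extend_sub_mem hφ ih) j)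
          convert h2 using 1
          rw [Function.iterate_succ_apply', map_sub, map_sub, map_nsmul, eq_add_of_sub_eq hb.symm,
            smul_sub, succ_nsmul]
          abel
      have := hj m
      rw [hiter, hφm, sub_self, zero_sub, neg_mem_iff] at this
      exact mem_J_of_nsmul hm this
  -- Since `b = φ g - g`, the expansions of `φ g` and `g` agree, hence so do those of
  -- `g⁻¹ * φ g` and `1`.
  have heq : rep (φ g) delta = rep g delta := by
    funext w
    have := hmem (w.length + 1) w (Nat.lt_succ_self _)
    rw [hb, extend_ι, map_sub, repAlg_ι, repAlg_ι, LinearMap.sub_apply, Pi.sub_apply,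
      sub_eq_zero] at this
    exact this
  have h1 : rep (g⁻¹ * φ g) delta = delta := by
    rw [map_mul, Module.End.mul_apply, heq, ← Module.End.mul_apply, ← map_mul, inv_mul_cancel,
      map_one, Module.End.one_apply]
  exact (inv_mul_eq_one.mp (eq_one_of_magnus h1)).symm

end Magnus

/-- **(Baumslag–Taylor.)**  Let `n ≥ 2` and let `K` be a finite subgroup of `Aut(𝔽ₙ)`.
Then the restriction to `K` of the natural homomorphism `Aut(𝔽ₙ) → Aut(𝔽ₙᵃᵇ) ≅ GLₙ(ℤ)`
induced by abelianization (sending `f` to `MulEquiv.abelianizationCongr f`) is injective. -/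
theorem finite_subgroup_aut_free_abelianization_injective
    (n : ℕ) (hn : 2 ≤ n)
    (K : Subgroup (MulAut (FreeGroup (Fin n))))
    (hK : (K : Set (MulAut (FreeGroup (Fin n)))).Finite) :
    Set.InjOn (fun f : MulAut (FreeGroup (Fin n)) => MulEquiv.abelianizationCongr f)
      (K : Set (MulAut (FreeGroup (Fin n)))) := by
  intro f hf g hg hfg
  have : Finite K := hK
  obtain ⟨m, hm, hpow⟩ := isOfFinOrder_iff_pow_eq_one.mp
    (isOfFinOrder_of_finite (⟨g⁻¹ * f, K.mul_mem (K.inv_mem hg) hf⟩ : K))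
  replace hpow : (g⁻¹ * f) ^ m = 1 := congrArg Subtype.val hpow
  have hab (x : FreeGroup (Fin n)) :
      Abelianization.of ((g⁻¹ * f) x) = Abelianization.of x := by
    have h1 : Abelianization.of (f x) = Abelianization.of (g x) :=
      DFunLike.congr_fun hfg (Abelianization.of x)
    have h2 := congrArg (Abelianization.map (g⁻¹ : MulAut _).toMonoidHom) h1
    rw [Abelianization.map_of, Abelianization.map_of] at h2
    refine h2.trans (congrArg _ ?_)
    exact MulAut.inv_apply_self _ g x
  have hiter (j : ℕ) (x : FreeGroup (Fin n)) :
      (g⁻¹ * f).toMonoidHom^[j] x = ((g⁻¹ * f) ^ j) x := by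
    induction j with
    | zero => rfl
    | succ j ih => rw [Function.iterate_succ_apply', ih, pow_succ']; rfl
  have hone : g⁻¹ * f = 1 := by
    ext1 x
    exact Magnus.eq_of_iterate (φ := (g⁻¹ * f).toMonoidHom) hab hm
      (fun y => by rw [hiter, hpow]; rfl) x
  exact (inv_mul_eq_one.mp hone).symm

end HypPaper
end

section
/- Let X be a hyperbolic geodesic metric space (not necessarily proper) and let f, g be two independent loxodromic isometries of X. Then there is m ∈ ℕ such that the subgroup H = ⟨f^m, g^m⟩ of the isometry group of X is free of rank 2, and moreover for any x ∈ X the orbit map H → X, h ↦ h·x, is a quasi-isometric embedding with respect to a word metric on H. -/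
/-!
In a hyperbolic space, Gromov's four-point condition (`IsHyperbolicSpace.fourPoint`, deduced
from slim triangles) turns local information into global information: a path whose turns are
wide, in the sense that the distance between the two neighbours of each vertex exceeds the
lengths of both adjacent edges by a definite constant, moves away from its start at every step.
This principle is used twice.

Applied to the orbit of a suitable power of a loxodromic isometry `f`, it shows that the
displacement `n ↦ d(o, fⁿ o)` is additive up to a bounded error (`coarse_additive`), so that
orbits behave like straight rays (`StraightOrbit`). If `fᵐ o` and `gᵐ o` had large Gromov product
for infinitely many `m`, comparing each early orbit point with late ones would make the two orbit
rays asymptotic (`near_of_frequently_close`). Hence, for independent `f` and `g` and `m` large,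
any two consecutive letters of a reduced word in `fᵐ, gᵐ` make a wide turn at `o`
(`eventually_turn`).

Applied to the path `o, a₁ o, a₁ a₂ o, …` traced by a reduced word `a₁ a₂ … aₙ`, the principle
bounds the displacement of `o` from below by the word length (`norm_le_displacement`). This gives
both freeness and the lower quasi-isometry bound; the upper bound is the triangle inequality, and
the choice of base point changes distances by a bounded amount only.
-/

open Set

namespace HypPaper

/-- The word metric on a group with respect to a (symmetrized) generating set `T`. -/
noncomputable def wdist {G : Type*} [Group G] (T : Set G) (g h : G) : ℕ :=
  sInf {n : ℕ | ∃ l : List G, l.length = n ∧ (∀ x ∈ l, x ∈ T ∨ x⁻¹ ∈ T) ∧ g * l.prod = h}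

variable {X : Type*} [MetricSpace X]

/-- `f` parametrizes a geodesic segment from `x` to `y` (by arclength on `[0, d(x,y)]`). -/
def IsGeodSegment (f : ℝ → X) (x y : X) : Prop :=
  f 0 = x ∧ f (dist x y) = y ∧
    ∀ s ∈ Icc (0 : ℝ) (dist x y), ∀ t ∈ Icc (0 : ℝ) (dist x y),
      dist (f s) (f t) = |s - t|

/-- A geodesic metric space: any two points are joined by a geodesic. -/
def GeodesicSpace (X : Type*) [MetricSpace X] : Prop :=
  ∀ x y : X, ∃ f : ℝ → X, IsGeodSegment f x y

/-- All geodesic triangles in `X` are `δ`-slim: each side is contained in the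
`δ`-neighborhood of the union of the other two sides. -/
def SlimTriangles (X : Type*) [MetricSpace X] (δ : ℝ) : Prop :=
  ∀ (x y z : X) (f g h : ℝ → X),
    IsGeodSegment f x y → IsGeodSegment g y z → IsGeodSegment h x z →
      ∀ t ∈ Icc (0 : ℝ) (dist x z),
        ∃ p ∈ f '' Icc (0 : ℝ) (dist x y) ∪ g '' Icc (0 : ℝ) (dist y z),
          dist (h t) p ≤ δ

/-- A (Gromov) hyperbolic geodesic metric space (not necessarily proper). -/
def IsHyperbolicSpace (X : Type*) [MetricSpace X] : Prop :=
  GeodesicSpace X ∧ ∃ δ : ℝ, 0 ≤ δ ∧ SlimTriangles X δ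

/-- An isometry `f` of `X` is elliptic if some (equivalently, any) `⟨f⟩`-orbit is bounded. -/
def IsElliptic (f : X ≃ᵢ X) : Prop :=
  ∃ (x : X) (R : ℝ), ∀ n : ℤ, dist ((f ^ n) x) x ≤ R

/-- An isometry `f` of `X` is loxodromic if some (equivalently, any) orbit map
`ℤ → X`, `n ↦ fⁿ(x)`, is a quasi-isometric embedding. -/
def IsLoxodromic (f : X ≃ᵢ X) : Prop :=
  ∃ (x : X) (k : ℝ), 1 ≤ k ∧ ∃ ε : ℝ, 0 ≤ ε ∧ ∀ m n : ℤ,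
    (1 / k) * |(m : ℝ) - (n : ℝ)| - ε ≤ dist ((f ^ m) x) ((f ^ n) x) ∧
    dist ((f ^ m) x) ((f ^ n) x) ≤ k * |(m : ℝ) - (n : ℝ)| + ε

/-- Two subsets of `X` are asymptotic if they are at finite Hausdorff distance. -/
def AsympSets (A B : Set X) : Prop :=
  ∃ R : ℝ, (∀ a ∈ A, ∃ b ∈ B, dist a b ≤ R) ∧ ∀ b ∈ B, ∃ a ∈ A, dist a b ≤ R

/-- Two loxodromic isometries are independent if they have no common fixed point in `∂X`,
i.e. no forward or backward orbit ray of one is asymptotic to one of the other. -/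
def IndependentLox (f g : X ≃ᵢ X) : Prop :=
  ∀ (x y : X) (s t : ℤ), (s = 1 ∨ s = -1) → (t = 1 ∨ t = -1) →
    ¬ AsympSets (range fun n : ℕ => (f ^ (s * n)) x) (range fun n : ℕ => (g ^ (t * n)) y)

/-! ### Gromov's four-point condition -/

/-- Gromov's four-point condition with additive error `e`: of the three sums of distances over
pairs of opposite edges of a quadrilateral, the largest exceeds the second largest by at
most `e`. -/
def FourPoint (X : Type*) [MetricSpace X] (e : ℝ) : Prop :=
  ∀ x y z w : X,
    dist x z + dist y w ≤ max (dist x y + dist z w) (dist x w + dist y z) + e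

/-- A point at parameter `t` on a geodesic segment splits the distance between the endpoints. -/
lemma IsGeodSegment.dist_endpoints {f : ℝ → X} {x y : X} (hf : IsGeodSegment f x y) {t : ℝ}
    (ht : t ∈ Icc (0 : ℝ) (dist x y)) :
    dist x (f t) = t ∧ dist (f t) y = dist x y - t := by
  obtain ⟨h0, h1, h2⟩ := hf
  have hD : (0 : ℝ) ≤ dist x y := dist_nonneg
  have a := h2 0 ⟨le_rfl, hD⟩ t ht
  have b := h2 t ht _ ⟨hD, le_rfl⟩
  rw [h0] at a
  rw [h1] at b
  rw [a, b, zero_sub, abs_neg, abs_of_nonneg ht.1, abs_sub_comm, abs_of_nonneg (by linarith [ht.2])]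
  exact ⟨rfl, rfl⟩

/-- The Gromov product `(x|y)_w` is at most the distance from `w` to any point of `[x, y]`. -/
lemma IsGeodSegment.product_le {f : ℝ → X} {x y : X} (hf : IsGeodSegment f x y) (w : X) {p : X}
    (hp : p ∈ f '' Icc (0 : ℝ) (dist x y)) :
    dist w x + dist w y - dist x y ≤ 2 * dist w p := by
  obtain ⟨t, ht, rfl⟩ := hp
  obtain ⟨a, b⟩ := hf.dist_endpoints ht
  have c := dist_triangle_right w x (f t)
  have d := dist_triangle w (f t) y
  linarith

/-- Some point of `[x, y]` is within the Gromov product `(x|y)_w`, up to an additive constant,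
of `w`: a point of `[x, y]` at which the nearby side of the triangle `x, w, y` changes. -/
lemma exists_near_point {δ : ℝ} (hδ : 0 ≤ δ) (hG : GeodesicSpace X) (hS : SlimTriangles X δ)
    {x y : X} {h : ℝ → X} (hh : IsGeodSegment h x y) (w : X) :
    ∃ t ∈ Icc (0 : ℝ) (dist x y),
      2 * dist w (h t) ≤ dist w x + dist w y - dist x y + 4 * δ + 2 := by
  classical
  obtain ⟨f, hf⟩ := hG x w
  obtain ⟨g, hg⟩ := hG w y
  have hD : (0 : ℝ) ≤ dist x y := dist_nonneg
  -- Walk along `[x, y]` in unit steps until leaving the neighbourhood of `[x, w]`.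
  let S : ℕ → Prop := fun n =>
    (n : ℝ) ≤ dist x y ∧ ∃ p ∈ f '' Icc (0 : ℝ) (dist x w), dist (h n) p ≤ δ
  have hex : ∃ n, ¬ S n := by
    obtain ⟨n, hn⟩ := exists_nat_gt (dist x y)
    exact ⟨n, fun hs => absurd hs.1 (not_le.2 hn)⟩
  have h0 : S 0 := by
    refine ⟨by simp, x, ⟨0, ⟨le_rfl, dist_nonneg⟩, hf.1⟩, ?_⟩
    rw [Nat.cast_zero, hh.1, dist_self]
    exact hδ
  obtain ⟨n, hn⟩ : ∃ n, Nat.find hex = n + 1 := by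
    refine Nat.exists_eq_succ_of_ne_zero fun h00 => ?_
    have := Nat.find_spec hex
    rw [h00] at this
    exact this h0
  have hns : ¬ S (n + 1) := hn ▸ Nat.find_spec hex
  have hs : S n := not_not.1 (Nat.find_min hex (by omega))
  obtain ⟨hnD, p, hp, hpd⟩ := hs
  have htn : (n : ℝ) ∈ Icc (0 : ℝ) (dist x y) := ⟨Nat.cast_nonneg n, hnD⟩
  refine ⟨n, htn, ?_⟩
  obtain ⟨q, hq, hqd⟩ : ∃ q ∈ g '' Icc (0 : ℝ) (dist w y), dist (h n) q ≤ δ + 1 := by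
    by_cases hc : ((n + 1 : ℕ) : ℝ) ≤ dist x y
    · have ht' : ((n + 1 : ℕ) : ℝ) ∈ Icc (0 : ℝ) (dist x y) := ⟨Nat.cast_nonneg _, hc⟩
      obtain ⟨q, hq, hqd⟩ := hS x w y f g h hf hg hh _ ht'
      rcases hq with hq | hq
      · exact absurd ⟨hc, q, hq, hqd⟩ hns
      · refine ⟨q, hq, ?_⟩
        have h1 := hh.2.2 _ htn _ ht'
        have h2 := dist_triangle (h n) (h ((n + 1 : ℕ) : ℝ)) q
        have h3 : |(n : ℝ) - ((n + 1 : ℕ) : ℝ)| = 1 := by push_cast; norm_num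
        linarith
    · refine ⟨y, ⟨dist w y, ⟨dist_nonneg, le_rfl⟩, hg.2.1⟩, ?_⟩
      have := (hh.dist_endpoints htn).2
      push_cast at hc
      linarith
  obtain ⟨hx, hy⟩ := hh.dist_endpoints htn
  obtain ⟨s, hs, rfl⟩ := hp
  obtain ⟨r, hr, rfl⟩ := hq
  obtain ⟨f1, f2⟩ := hf.dist_endpoints hs
  obtain ⟨g1, g2⟩ := hg.dist_endpoints hr
  have t1 := dist_triangle w (f s) (h n)
  have t2 := dist_triangle x (f s) (h n)
  have t3 := dist_triangle w (g r) (h n)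
  have t4 := dist_triangle (h n) (g r) y
  rw [dist_comm w (f s), dist_comm (f s) (h n)] at t1
  rw [dist_comm (f s) (h n)] at t2
  rw [dist_comm (g r) (h n)] at t3
  rw [dist_comm w x]
  linarith

lemma IsHyperbolicSpace.fourPoint (hX : IsHyperbolicSpace X) : ∃ e : ℝ, 0 ≤ e ∧ FourPoint X e := by
  obtain ⟨hG, δ, hδ, hS⟩ := hX
  refine ⟨6 * δ + 2, by linarith, fun x y z w => ?_⟩
  obtain ⟨f, hf⟩ := hG x y
  obtain ⟨g, hg⟩ := hG y z
  obtain ⟨h, hh⟩ := hG x z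
  obtain ⟨t, ht, hw⟩ := exists_near_point hδ hG hS hh w
  obtain ⟨p, hp, hpd⟩ := hS x y z f g h hf hg hh t ht
  have hwp := dist_triangle w (h t) p
  have c1 := dist_comm w x
  have c2 := dist_comm w y
  have c3 := dist_comm w z
  rcases hp with hp | hp
  · have := hf.product_le w hp
    have := le_max_right (dist x y + dist z w) (dist x w + dist y z)
    have := le_max_left (dist x y + dist z w) (dist x w + dist y z)
    linarith
  · have := hg.product_le w hp
    have := le_max_right (dist x y + dist z w) (dist x w + dist y z)
    have := le_max_left (dist x y + dist z w) (dist x w + dist y z)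
    linarith

/-! ### Coarse additivity along a loxodromic orbit -/

/-- Let `D n` be the distance between any two terms of a sequence whose indices differ by `n`. If
`D` has linear growth, then for some step size `N` the turn of the sequence at time `N`, between
times `0` and `2 * N`, is as wide as desired: otherwise `D` would grow only logarithmically along
powers of two. -/
lemma exists_wide_turn {D : ℕ → ℝ} {k ε : ℝ} (hk : 1 ≤ k)
    (hlow : ∀ n : ℕ, (n : ℝ) / k - ε ≤ D n) (K : ℝ) (hK : 0 ≤ K) :
    ∃ N : ℕ, 1 ≤ N ∧ D N + K ≤ D (2 * N) := by
  by_contra! hcon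
  have hpow : ∀ j : ℕ, D (2 ^ j) ≤ D 1 + j * K := by
    intro j
    induction j with
    | zero => simp
    | succ j ih =>
      have := hcon (2 ^ j) Nat.one_le_two_pow
      rw [pow_succ']
      push_cast
      linarith
  -- The growth of `2 ^ (2 * i) ≥ (i + 1) ^ 2` beats the linear bound.
  obtain ⟨i, hi⟩ := exists_nat_gt (k * |D 1 + ε| + 2 * K * k)
  have h1 := hpow (2 * i)
  have h2 := hlow (2 ^ (2 * i))
  have h3 : ((i : ℝ) + 1) ^ 2 ≤ ((2 ^ (2 * i) : ℕ) : ℝ) := by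
    have : i + 1 ≤ 2 ^ i := Nat.lt_two_pow_self
    have h4 : (i + 1) ^ 2 ≤ 2 ^ (2 * i) := by
      rw [mul_comm, pow_mul]
      exact Nat.pow_le_pow_left this 2
    exact_mod_cast h4
  have h5 : ((2 ^ (2 * i) : ℕ) : ℝ) ≤ k * (D 1 + ε + 2 * i * K) := by
    have h6 : ((2 ^ (2 * i) : ℕ) : ℝ) / k ≤ D 1 + ε + 2 * i * K := by
      push_cast at h1 h2 ⊢
      linarith
    rw [div_le_iff₀ (by linarith)] at h6
    linarith
  have h7 := le_abs_self (D 1 + ε)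
  have h8 : k * (D 1 + ε) ≤ k * |D 1 + ε| := by gcongr
  have h9 : 0 ≤ k * |D 1 + ε| := by positivity
  have h10 : (0 : ℝ) ≤ i := Nat.cast_nonneg i
  have h11 := mul_le_mul_of_nonneg_left hi.le h10
  nlinarith [mul_nonneg h10 h9]

/-- If the first turn of a homogeneous sequence is wide, the sequence progresses away from its
start by a definite amount at each step. -/
lemma progress {e : ℝ} (hfp : FourPoint X e) {u : ℕ → X} {E : ℕ → ℝ}
    (hE : ∀ a b, dist (u a) (u (a + b)) = E b) {K : ℝ} (hK : e < K) (h2 : E 1 + K ≤ E 2)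
    (n : ℕ) : E n + (K - e) ≤ E (n + 1) := by
  have hnn : ∀ n, 0 ≤ E n := fun n => by rw [← hE 0 n]; exact dist_nonneg
  have h0 : E 0 = 0 := by rw [← hE 0 0]; exact dist_self _
  have he : 0 ≤ e := by
    have := hfp (u 0) (u 0) (u 0) (u 0)
    simpa using this
  induction n with
  | zero =>
    have := dist_triangle (u 0) (u (0 + 1)) (u (0 + 2))
    have h3 := hE 1 1
    simp only [hE] at this
    rw [show u (0 + 2) = u (1 + 1) from rfl, show u (0 + 1) = u 1 from rfl, h3] at this
    simp only [zero_add]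
    linarith
  | succ n ih =>
    -- The alternative of the four-point condition that does not bound `E (n + 2)` from below
    -- contradicts the progress made at the previous step.
    have h := hfp (u 0) (u n) (u (n + 1)) (u (n + 2))
    have a1 := hE 0 n
    have a2 := hE 0 (n + 1)
    have a3 := hE 0 (n + 2)
    have a4 := hE n 1
    have a5 := hE n 2
    have a6 := hE (n + 1) 1
    rw [zero_add] at a1 a2 a3
    rw [show n + 1 + 1 = n + 2 from rfl] at a6 ⊢
    rw [a1, a2, a3, a4, a5, a6] at h
    rcases max_cases (E n + E 1) (E (n + 2) + E 1) with ⟨hm, _⟩ | ⟨hm, _⟩ <;> rw [hm] at h <;>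
      linarith

/-- Coarse additivity when the first turn is wide: in the tree-like picture at `u n`, the points
`u 0` and `u (n - 1)` lie in one direction and `u (n + 1)` and `u (n + p)` in another. -/
lemma additive_of_wide_turn {e : ℝ} (hfp : FourPoint X e) {u : ℕ → X} {E : ℕ → ℝ}
    (hE : ∀ a b, dist (u a) (u (a + b)) = E b) (h2 : E 1 + (2 * e + 1) ≤ E 2)
    (n p : ℕ) : E n + E p - E 1 ≤ E (n + p) := by
  have hnn : ∀ n, 0 ≤ E n := fun n => by rw [← hE 0 n]; exact dist_nonneg
  have h0 : E 0 = 0 := by rw [← hE 0 0]; exact dist_self _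
  have he : 0 ≤ e := by
    have := hfp (u 0) (u 0) (u 0) (u 0)
    simpa using this
  have hpr := progress hfp hE (by linarith) h2
  rcases n with _ | n
  · simp only [zero_add, h0]; linarith [hnn 1]
  rcases p with _ | p
  · rw [h0, add_zero]; linarith [hnn 1]
  have A := hfp (u n) (u 0) (u (n + 2)) (u (n + 1))
  have B := hfp (u 0) (u (n + 1 + (p + 1))) (u (n + 2)) (u (n + 1))
  have p1 := hpr n
  have p2 := hpr p
  have a1 := hE 0 n
  have a2 := hE 0 (n + 1)
  have a3 := hE 0 (n + 2)
  have a4 := hE n 1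
  have a5 := hE n 2
  have a6 := hE (n + 1) 1
  have a7 := hE 0 (n + 1 + (p + 1))
  have a8 := hE (n + 2) p
  have a9 := hE (n + 1) (p + 1)
  rw [zero_add] at a1 a2 a3 a7
  rw [show n + 2 + p = n + 1 + (p + 1) by ring] at a8
  rw [dist_comm] at a6 a8 a9 a1
  rw [show n + 1 + 1 = n + 2 from rfl] at a6
  rw [a1, a2, a3, a4, a5, a6] at A
  rw [a2, a3, a6, a7, a8, a9] at B
  rcases max_cases (E n + E 1) (E 1 + E (n + 2)) with ⟨hm, _⟩ | ⟨hm, _⟩ <;> rw [hm] at A <;>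
  rcases max_cases (E (n + 1 + (p + 1)) + E 1) (E (n + 1) + E p) with ⟨hm, _⟩ | ⟨hm, _⟩ <;>
    rw [hm] at B <;> linarith

/-- The displacement along a homogeneous sequence of linear growth is additive up to a bounded
error. -/
lemma coarse_additive {e : ℝ} (he : 0 ≤ e) (hfp : FourPoint X e) {u : ℕ → X} {D : ℕ → ℝ}
    (hD : ∀ a b, dist (u a) (u (a + b)) = D b) {k ε : ℝ} (hk : 1 ≤ k)
    (hlow : ∀ n : ℕ, (n : ℝ) / k - ε ≤ D n) :
    ∃ C : ℝ, 0 ≤ C ∧ ∀ n p : ℕ, D n + D p - C ≤ D (n + p) := by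
  have hnn : ∀ n, 0 ≤ D n := fun n => by rw [← hD 0 n]; exact dist_nonneg
  obtain ⟨N, hN, hND⟩ := exists_wide_turn hk hlow (2 * e + 1) (by linarith)
  have hE : ∀ a b, dist (u (N * a)) (u (N * (a + b))) = D (N * b) := fun a b => by
    rw [mul_add, hD]
  have hadd : ∀ n p, D (N * n) + D (N * p) - D (N * 1) ≤ D (N * (n + p)) := fun n p =>
    additive_of_wide_turn (u := fun n => u (N * n)) (E := fun n => D (N * n)) hfp hE
      (by simpa [mul_comm] using hND) n p
  -- The step size `N` has wide turns; `B` bounds the effect of rounding to multiples of `N`.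
  set B := ∑ r ∈ Finset.range N, D r with hB
  have hDB : ∀ r, r < N → D r ≤ B := fun r hr =>
    Finset.single_le_sum (f := D) (fun i _ => hnn i) (Finset.mem_range.2 hr)
  have hB0 : 0 ≤ B := Finset.sum_nonneg fun i _ => hnn i
  have hsub : ∀ a b, D (a + b) ≤ D a + D b := fun a b => by
    have := dist_triangle (u 0) (u (0 + a)) (u (0 + a + b))
    rw [hD, hD, add_assoc, hD] at this
    exact this
  refine ⟨D (N * 1) + 4 * B, by linarith [hnn (N * 1)], fun n p => ?_⟩
  obtain ⟨q, r, hr, rfl⟩ : ∃ q r, r < N ∧ n = N * q + r :=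
    ⟨n / N, n % N, Nat.mod_lt _ hN, (Nat.div_add_mod n N).symm⟩
  obtain ⟨q', r', hr', rfl⟩ : ∃ q r, r < N ∧ p = N * q + r :=
    ⟨p / N, p % N, Nat.mod_lt _ hN, (Nat.div_add_mod p N).symm⟩
  have h1 := hsub (N * q) r
  have h2 := hsub (N * q') r'
  have h3 := hadd q q'
  have h4 := hsub r r'
  have h5 : D (N * (q + q')) ≤ D (N * q + r + (N * q' + r')) + D (r + r') := by
    have := dist_triangle_right (u 0) (u (0 + N * (q + q'))) (u (0 + N * (q + q') + (r + r')))
    rw [hD, hD, add_assoc, hD] at this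
    rwa [show N * q + r + (N * q' + r') = N * (q + q') + (r + r') by ring]
  have := hDB r hr
  have := hDB r' hr'
  linarith

/-! ### Diverging rays -/

/-- If two rays from `o` have arbitrarily late points at which they have not yet diverged, then
one stays in a bounded neighbourhood of the other. -/
lemma near_of_frequently_close {e : ℝ} (he : 0 ≤ e) (hfp : FourPoint X e) {o : X} {u v : ℕ → X}
    {C L K : ℝ} (hC : 0 ≤ C) (hL : 0 ≤ L) (hv0 : v 0 = o)
    (hu : ∀ n p, dist o (u n) + dist (u n) (u (n + p)) - C ≤ dist o (u (n + p)))
    (hv : ∀ n p, dist o (v n) + dist (v n) (v (n + p)) - C ≤ dist o (v (n + p)))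
    (hvL : ∀ n, dist o (v (n + 1)) ≤ dist o (v n) + L)
    (hut : Filter.Tendsto (fun n => dist o (u n)) Filter.atTop Filter.atTop)
    (hvt : Filter.Tendsto (fun n => dist o (v n)) Filter.atTop Filter.atTop)
    (hfreq : ∃ᶠ m in Filter.atTop,
      dist (u m) (v m) < max (dist o (u m)) (dist o (v m)) + K) (n : ℕ) :
    ∃ p, dist (u n) (v p) ≤ L + C + 2 * e := by
  classical
  -- Compare `u n` with the first point of the second ray that is as far from `o`.
  have hex : ∃ p, dist o (u n) ≤ dist o (v p) :=
    (hvt.eventually_ge_atTop (dist o (u n))).exists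
  set p := Nat.find hex with hp
  have hpge : dist o (u n) ≤ dist o (v p) := Nat.find_spec hex
  have hple : dist o (v p) ≤ dist o (u n) + L := by
    rcases hpc : p with _ | q
    · rw [hv0, dist_self]; positivity
    · have : ¬ dist o (u n) ≤ dist o (v q) := Nat.find_min hex (by omega)
      have := hvL q
      linarith
  refine ⟨p, ?_⟩
  -- Estimate the Gromov product of `u n` and `v p` along the chain `u n, u m, v m, v p`, with `m`
  -- so late that the product of `u m` and `v m` is not the bottleneck.
  obtain ⟨m, hm, hmn, hmp, hmu, hmv⟩ := (hfreq.and_eventually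
    ((Filter.eventually_ge_atTop n).and ((Filter.eventually_ge_atTop p).and
      ((hut.eventually_ge_atTop (2 * dist o (u n) + K)).and
        (hvt.eventually_ge_atTop (2 * dist o (u n) + K)))))).exists
  obtain ⟨a, rfl⟩ := Nat.exists_eq_add_of_le hmn
  have hva : ∃ b, n + a = p + b := Nat.exists_eq_add_of_le hmp
  obtain ⟨b, hb⟩ := hva
  have h1 := hu n a
  have h2 := hv p b
  rw [← hb] at h2
  set m := n + a
  have A := hfp (u n) (u m) (v m) o
  have B := hfp (u n) (v m) (v p) o
  rw [dist_comm _ o, dist_comm _ o, dist_comm _ o] at A B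
  rw [dist_comm (v p) (v m)] at h2
  rcases max_cases (dist o (u m)) (dist o (v m)) with ⟨hm', _⟩ | ⟨hm', _⟩ <;> rw [hm'] at hm <;>
  rcases max_cases (dist (u n) (u m) + dist o (v m)) (dist o (u n) + dist (u m) (v m))
    with ⟨hA, _⟩ | ⟨hA, _⟩ <;> rw [hA] at A <;>
  rcases max_cases (dist (u n) (v m) + dist o (v p)) (dist o (u n) + dist (v m) (v p))
    with ⟨hB, _⟩ | ⟨hB, _⟩ <;> rw [hB] at B <;> linarith

/-! ### Orbits of loxodromic isometries -/

/-- The forward orbit of `o` under `f` is a coarsely straight ray: it leaves every bounded set,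
and the displacement of `fⁿ` at `o` is additive in `n` up to a bounded error. -/
def StraightOrbit (f : X ≃ᵢ X) (o : X) : Prop :=
  (∃ C : ℝ, 0 ≤ C ∧ ∀ n p : ℕ,
    dist o ((f ^ n) o) + dist o ((f ^ p) o) - C ≤ dist o ((f ^ (n + p)) o)) ∧
  Filter.Tendsto (fun n : ℕ => dist o ((f ^ n) o)) Filter.atTop Filter.atTop

lemma dist_pow_add (f : X ≃ᵢ X) (o : X) (a b : ℕ) :
    dist ((f ^ a) o) ((f ^ (a + b)) o) = dist o ((f ^ b) o) := by
  rw [pow_add, IsometryEquiv.mul_apply, IsometryEquiv.dist_eq]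

lemma dist_inv_apply (f : X ≃ᵢ X) (o : X) : dist o (f⁻¹ o) = dist o (f o) := by
  rw [← f.dist_eq o (f⁻¹ o), IsometryEquiv.apply_inv_self, dist_comm]

lemma dist_inv_pow (f : X ≃ᵢ X) (o : X) (n : ℕ) :
    dist o ((f⁻¹ ^ n) o) = dist o ((f ^ n) o) := by
  rw [inv_pow, dist_inv_apply]

lemma StraightOrbit.inv {f : X ≃ᵢ X} {o : X} (hf : StraightOrbit f o) :
    StraightOrbit f⁻¹ o := by
  simpa only [StraightOrbit, dist_inv_pow] using hf

lemma IsLoxodromic.straightOrbit {e : ℝ} (he : 0 ≤ e) (hfp : FourPoint X e) {f : X ≃ᵢ X}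
    (hf : IsLoxodromic f) (o : X) : StraightOrbit f o := by
  obtain ⟨x, k, hk, ε, hε, h⟩ := hf
  have hlow : ∀ n : ℕ, (n : ℝ) / k - (ε + 2 * dist o x) ≤ dist o ((f ^ n) o) := by
    intro n
    have h1 := (h 0 n).1
    have h2 : |((0 : ℤ) : ℝ) - ((n : ℤ) : ℝ)| = n := by simp
    rw [h2, zpow_zero, zpow_natCast, IsometryEquiv.coe_one, id, one_div_mul_eq_div] at h1
    have h3 := dist_triangle4 x o ((f ^ n) o) ((f ^ n) x)
    rw [IsometryEquiv.dist_eq, dist_comm x o] at h3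
    linarith
  refine ⟨coarse_additive he hfp (u := fun n => (f ^ n) o) (dist_pow_add f o) hk hlow, ?_⟩
  refine Filter.tendsto_atTop_mono hlow (Filter.tendsto_atTop_add_const_right _ _ ?_)
  exact tendsto_natCast_atTop_atTop.atTop_div_const (by linarith)

lemma AsympSets.symm {A B : Set X} (h : AsympSets A B) : AsympSets B A := by
  obtain ⟨R, h1, h2⟩ := h
  refine ⟨R, fun b hb => ?_, fun a ha => ?_⟩
  · obtain ⟨a, ha, hab⟩ := h2 b hb
    exact ⟨a, ha, by rwa [dist_comm]⟩
  · obtain ⟨b, hb, hab⟩ := h1 a ha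
    exact ⟨b, hb, by rwa [dist_comm]⟩

/-- Straight orbits that are not asymptotic diverge: the Gromov product of `fᵐ o` and `gᵐ o`
at `o` is eventually smaller, by any prescribed amount, than half of either displacement. -/
lemma StraightOrbit.eventually_diverge {e : ℝ} (he : 0 ≤ e) (hfp : FourPoint X e)
    {f g : X ≃ᵢ X} {o : X} (hf : StraightOrbit f o) (hg : StraightOrbit g o)
    (hfg : ¬ AsympSets (range fun n : ℕ => (f ^ n) o) (range fun n : ℕ => (g ^ n) o)) (K : ℝ) :
    ∀ᶠ m in Filter.atTop, max (dist o ((f ^ m) o)) (dist o ((g ^ m) o)) + K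
      ≤ dist ((f ^ m) o) ((g ^ m) o) := by
  by_contra hcon
  rw [Filter.not_eventually] at hcon
  simp only [not_le] at hcon
  obtain ⟨⟨C, hC, hfC⟩, hft⟩ := hf
  obtain ⟨⟨C', hC', hgC⟩, hgt⟩ := hg
  have hstep : ∀ (φ : X ≃ᵢ X) (n : ℕ),
      dist o ((φ ^ (n + 1)) o) ≤ dist o ((φ ^ n) o) + dist o (φ o) := fun φ n => by
    have := dist_triangle o ((φ ^ n) o) ((φ ^ (n + 1)) o)
    rwa [dist_pow_add, pow_one] at this
  have hcon' : ∃ᶠ m in Filter.atTop, dist ((g ^ m) o) ((f ^ m) o)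
      < max (dist o ((g ^ m) o)) (dist o ((f ^ m) o)) + K :=
    hcon.mono fun m hm => by rwa [dist_comm, max_comm]
  have n1 := near_of_frequently_close he hfp (o := o) (u := fun n => (f ^ n) o)
    (v := fun n => (g ^ n) o) (C := C + C') (by positivity) (dist_nonneg (x := o) (y := g o)) rfl
    (fun n p => by rw [dist_pow_add]; linarith [hfC n p])
    (fun n p => by rw [dist_pow_add]; linarith [hgC n p]) (hstep g) hft hgt hcon
  have n2 := near_of_frequently_close he hfp (o := o) (u := fun n => (g ^ n) o)
    (v := fun n => (f ^ n) o) (C := C + C') (by positivity) (dist_nonneg (x := o) (y := f o)) rfl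
    (fun n p => by rw [dist_pow_add]; linarith [hgC n p])
    (fun n p => by rw [dist_pow_add]; linarith [hfC n p]) (hstep f) hgt hft hcon'
  refine hfg ⟨dist o (f o) + dist o (g o) + (C + C') + 2 * e, ?_, ?_⟩
  · rintro _ ⟨n, rfl⟩
    obtain ⟨p, hp⟩ := n1 n
    exact ⟨_, ⟨p, rfl⟩, by linarith [dist_nonneg (x := o) (y := f o)]⟩
  · rintro _ ⟨n, rfl⟩
    obtain ⟨p, hp⟩ := n2 n
    refine ⟨_, ⟨p, rfl⟩, ?_⟩
    rw [dist_comm]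
    linarith [dist_nonneg (x := o) (y := g o)]

lemma StraightOrbit.eventually_wide {f : X ≃ᵢ X} {o : X} (hf : StraightOrbit f o) (K : ℝ) :
    ∀ᶠ m in Filter.atTop, max (dist o ((f ^ m) o)) (dist o ((f ^ m) o)) + K
      ≤ dist ((f ^ m)⁻¹ o) ((f ^ m) o) := by
  obtain ⟨⟨C, hC, hfC⟩, hft⟩ := hf
  filter_upwards [hft.eventually_ge_atTop (C + K)] with m hm
  have h1 : dist ((f ^ m)⁻¹ o) ((f ^ m) o) = dist o ((f ^ (m + m)) o) := by
    rw [← (f ^ m).dist_eq, IsometryEquiv.apply_inv_self, pow_add, IsometryEquiv.mul_apply]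
  rw [h1, max_self]
  linarith [hfC m m]

/-! ### Ping-pong -/

/-- The isometry named by a letter: `φ i` for `(i, true)` and its inverse for `(i, false)`. -/
def letter {ι : Type*} (φ : ι → X ≃ᵢ X) (l : ι × Bool) : X ≃ᵢ X :=
  cond l.2 (φ l.1) (φ l.1)⁻¹

/-- If consecutive letters of reduced words make wide turns at `o`, then prefixing a letter to a
reduced word increases its displacement of `o` by at least one. -/
lemma displacement_cons {ι : Type*} {e : ℝ} (hfp : FourPoint X e) {φ : ι → X ≃ᵢ X} {o : X}
    (hturn : ∀ l l' : ι × Bool, (l.1 = l'.1 → l.2 = l'.2) →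
      max (dist o (letter φ l o)) (dist o (letter φ l' o)) + (e + 1)
        ≤ dist ((letter φ l)⁻¹ o) (letter φ l' o))
    (L : List (ι × Bool)) (l : ι × Bool) (hL : FreeGroup.IsReduced (l :: L)) :
    dist o ((L.map (letter φ)).prod o) + 1 ≤ dist o (((l :: L).map (letter φ)).prod o) := by
  have he : 0 ≤ e := by
    have := hfp o o o o
    simpa using this
  induction L generalizing l with
  | nil =>
    have h1 := hturn l l fun _ => rfl
    have h2 := dist_triangle_left ((letter φ l)⁻¹ o) (letter φ l o) o
    rw [dist_inv_apply] at h2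
    rw [max_self] at h1
    simp only [List.map_nil, List.prod_nil, List.map_cons, mul_one, IsometryEquiv.coe_one, id,
      List.prod_cons, dist_self]
    linarith
  | cons l' L ih =>
    rw [FreeGroup.isReduced_cons_cons] at hL
    have ih' := ih l' hL.2
    have ht := hturn l l' hL.1
    rw [List.map_cons, List.prod_cons, IsometryEquiv.mul_apply] at ih'
    simp only [List.map_cons, List.prod_cons, IsometryEquiv.mul_apply]
    set w := (L.map (letter φ)).prod o
    -- Of the two alternatives in the four-point condition, the first contradicts the progress
    -- made by the letter `l'`.
    have h := hfp o ((letter φ l)⁻¹ o) (letter φ l' w) (letter φ l' o)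
    have h1 : dist ((letter φ l)⁻¹ o) (letter φ l' w) = dist o (letter φ l (letter φ l' w)) := by
      rw [← (letter φ l).dist_eq, IsometryEquiv.apply_inv_self]
    rw [dist_inv_apply, (letter φ l').dist_eq, h1, dist_comm w o] at h
    have := le_max_left (dist o (letter φ l o)) (dist o (letter φ l' o))
    have := le_max_right (dist o (letter φ l o)) (dist o (letter φ l' o))
    rcases max_cases (dist o (letter φ l o) + dist o w)
      (dist o (letter φ l' o) + dist o (letter φ l (letter φ l' w)))
      with ⟨hm, _⟩ | ⟨hm, _⟩ <;> rw [hm] at h <;> linarith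

lemma norm_le_displacement {ι : Type*} [DecidableEq ι] {e : ℝ} (hfp : FourPoint X e)
    {φ : ι → X ≃ᵢ X} {o : X}
    (hturn : ∀ l l' : ι × Bool, (l.1 = l'.1 → l.2 = l'.2) →
      max (dist o (letter φ l o)) (dist o (letter φ l' o)) + (e + 1)
        ≤ dist ((letter φ l)⁻¹ o) (letter φ l' o))
    (w : FreeGroup ι) : (w.norm : ℝ) ≤ dist o (FreeGroup.lift φ w o) := by
  have key : ∀ L : List (ι × Bool), FreeGroup.IsReduced L →
      (L.length : ℝ) ≤ dist o ((L.map (letter φ)).prod o) := by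
    intro L
    induction L with
    | nil => simp
    | cons l L ih =>
      intro hL
      have h1 := ih (List.IsChain.tail hL)
      have h2 := displacement_cons hfp hturn L l hL
      rw [List.length_cons]
      push_cast
      linarith
  have h := key w.toWord FreeGroup.isReduced_toWord
  rw [← FreeGroup.mk_toWord (x := w), FreeGroup.lift_mk, FreeGroup.mk_toWord]
  exact h

/-- For all large `m`, the powers `fᵐ, gᵐ` and their inverses make wide turns at `o`. -/
lemma eventually_turn {e : ℝ} (he : 0 ≤ e) (hfp : FourPoint X e) {f g : X ≃ᵢ X}
    (hf : IsLoxodromic f) (hg : IsLoxodromic g) (hind : IndependentLox f g) (o : X) (K : ℝ) :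
    ∀ᶠ m : ℕ in Filter.atTop, ∀ l l' : Fin 2 × Bool, (l.1 = l'.1 → l.2 = l'.2) →
      max (dist o (letter ![f ^ m, g ^ m] l o)) (dist o (letter ![f ^ m, g ^ m] l' o)) + K
        ≤ dist ((letter ![f ^ m, g ^ m] l)⁻¹ o) (letter ![f ^ m, g ^ m] l' o) := by
  have sf := hf.straightOrbit he hfp o
  have sg := hg.straightOrbit he hfp o
  have hs : ∀ l, StraightOrbit (letter ![f, g] l) o := by
    rintro ⟨i, b⟩
    fin_cases i <;> cases b
    exacts [sf.inv, sf, sg.inv, sg]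
  have hpow : ∀ (m : ℕ) l, letter ![f ^ m, g ^ m] l = letter ![f, g] l ^ m := by
    rintro m ⟨i, b⟩
    fin_cases i <;> cases b <;> simp [letter]
  have hinv : ∀ i b, (letter ![f, g] (i, b))⁻¹ = letter ![f, g] (i, !b) := by
    intro i b
    cases b <;> simp [letter]
  have hna : ∀ b c, ¬ AsympSets (range fun n : ℕ => (letter ![f, g] (0, b) ^ n) o)
      (range fun n : ℕ => (letter ![f, g] (1, c) ^ n) o) := by
    intro b c
    have hl : ∀ (φ : X ≃ᵢ X) (b : Bool) (n : ℕ),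
        φ ^ ((cond b 1 (-1) : ℤ) * n) = (cond b φ φ⁻¹) ^ n := by
      intro φ b n
      cases b <;> simp
    have := hind o o (cond b 1 (-1)) (cond c 1 (-1)) (by cases b <;> simp) (by cases c <;> simp)
    simp only [hl] at this
    exact this
  have hna' : ∀ i j b c, i ≠ j → ¬ AsympSets (range fun n : ℕ => (letter ![f, g] (i, b) ^ n) o)
      (range fun n : ℕ => (letter ![f, g] (j, c) ^ n) o) := by
    intro i j b c hij
    fin_cases i <;> fin_cases j
    · exact absurd rfl hij
    · exact hna b c
    · exact fun h => hna c b h.symm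
    · exact absurd rfl hij
  rw [Filter.eventually_all]
  rintro ⟨i, b⟩
  rw [Filter.eventually_all]
  rintro ⟨j, c⟩
  rw [Filter.eventually_imp_distrib_left]
  intro hbc
  simp only [hpow]
  by_cases hij : i = j
  · obtain rfl := hij
    obtain rfl : b = c := hbc rfl
    exact (hs _).eventually_wide K
  · have := (hs (i, !b)).eventually_diverge he hfp (hs (j, c)) (hna' i j (!b) c hij) K
    simpa only [← hinv, inv_pow, dist_inv_apply] using this

/-! ### The word metric -/

/-- The word metric is at most the length of any word in the generators representing
`g⁻¹ * h`. -/
lemma wdist_le {G : Type*} [Group G] {T : Set G} {g h : G} (l : List G)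
    (hl : ∀ x ∈ l, x ∈ T ∨ x⁻¹ ∈ T) (hgh : g * l.prod = h) : wdist T g h ≤ l.length :=
  Nat.sInf_le ⟨l, rfl, hl, hgh⟩

lemma exists_word {G : Type*} [Group G] {T : Set G} {g h : G} (l : List G)
    (hl : ∀ x ∈ l, x ∈ T ∨ x⁻¹ ∈ T) (hgh : g * l.prod = h) :
    ∃ l' : List G, l'.length = wdist T g h ∧ (∀ x ∈ l', x ∈ T ∨ x⁻¹ ∈ T) ∧ g * l'.prod = h :=
  Nat.sInf_mem (s := {n : ℕ | ∃ l : List G, l.length = n ∧ (∀ x ∈ l, x ∈ T ∨ x⁻¹ ∈ T) ∧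
    g * l.prod = h}) ⟨_, l, rfl, hl, hgh⟩

lemma displacement_prod_le {H : Subgroup (X ≃ᵢ X)} {o : X} {M : ℝ} (l : List H)
    (hl : ∀ x ∈ l, dist o ((x : X ≃ᵢ X) o) ≤ M) :
    dist o (((l.prod : H) : X ≃ᵢ X) o) ≤ M * l.length := by
  induction l with
  | nil => simp
  | cons x l ih =>
    have h1 := ih fun y hy => hl y (List.mem_cons_of_mem _ hy)
    have h2 := hl x List.mem_cons_self
    have h3 := dist_triangle o ((x : X ≃ᵢ X) o) ((x : X ≃ᵢ X) (((l.prod : H) : X ≃ᵢ X) o))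
    rw [IsometryEquiv.dist_eq] at h3
    rw [List.prod_cons, Subgroup.coe_mul, IsometryEquiv.mul_apply, List.length_cons,
      Nat.cast_succ]
    linarith

/-- Let `X` be a hyperbolic geodesic metric space (not necessarily proper) and `f, g` two
independent loxodromic isometries of `X`.  Then there is `m ∈ ℕ` such that
`H = ⟨fᵐ, gᵐ⟩ ≤ Isom(X)` is free of rank `2`, and for any `x ∈ X` the orbit map `H → X`,
`h ↦ h·x`, is a quasi-isometric embedding with respect to a word metric on `H`
(namely the one coming from the generators `fᵐ, gᵐ`). -/
theorem pingpong_free_subgroup_of_independent_loxodromics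
    (hX : IsHyperbolicSpace X) (f g : X ≃ᵢ X)
    (hf : IsLoxodromic f) (hg : IsLoxodromic g) (hind : IndependentLox f g) :
    ∃ m : ℕ, 0 < m ∧
      Nonempty (Subgroup.closure ({f ^ m, g ^ m} : Set (X ≃ᵢ X)) ≃* FreeGroup (Fin 2)) ∧
      ∀ x : X, ∃ k : ℝ, 1 ≤ k ∧ ∃ ε : ℝ, 0 ≤ ε ∧
        ∀ h₁ h₂ : Subgroup.closure ({f ^ m, g ^ m} : Set (X ≃ᵢ X)),
          (1 / k) * (wdist {h : Subgroup.closure ({f ^ m, g ^ m} : Set (X ≃ᵢ X)) |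
                (h : X ≃ᵢ X) = f ^ m ∨ (h : X ≃ᵢ X) = g ^ m} h₁ h₂ : ℝ) - ε ≤
              dist ((h₁ : X ≃ᵢ X) x) ((h₂ : X ≃ᵢ X) x) ∧
          dist ((h₁ : X ≃ᵢ X) x) ((h₂ : X ≃ᵢ X) x) ≤
            k * (wdist {h : Subgroup.closure ({f ^ m, g ^ m} : Set (X ≃ᵢ X)) |
                (h : X ≃ᵢ X) = f ^ m ∨ (h : X ≃ᵢ X) = g ^ m} h₁ h₂ : ℝ) + ε := by
  classical
  obtain ⟨e, he, hfp⟩ := hX.fourPoint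
  obtain ⟨o, -⟩ := id hf
  obtain ⟨m, hturn, hm⟩ := ((eventually_turn he hfp hf hg hind o (e + 1)).and
    (Filter.eventually_gt_atTop 0)).exists
  have hnorm := norm_le_displacement hfp hturn
  set Φ : FreeGroup (Fin 2) →* (X ≃ᵢ X) := FreeGroup.lift ![f ^ m, g ^ m] with hΦ
  have hrange : Φ.range = Subgroup.closure ({f ^ m, g ^ m} : Set (X ≃ᵢ X)) := by
    rw [hΦ, FreeGroup.range_lift_eq_closure, Matrix.range_cons, Matrix.range_cons,
      Matrix.range_empty, union_empty]
    rfl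
  have hinj : Function.Injective Φ := by
    rw [injective_iff_map_eq_one]
    intro w hw
    have := hnorm w
    rw [hw, IsometryEquiv.coe_one, id, dist_self] at this
    rw [← FreeGroup.norm_eq_zero]
    exact_mod_cast le_antisymm this (Nat.cast_nonneg _)
  refine ⟨m, hm, ⟨((MonoidHom.ofInjective hinj).trans (MulEquiv.subgroupCongr hrange)).symm⟩, ?_⟩
  intro x
  set H := Subgroup.closure ({f ^ m, g ^ m} : Set (X ≃ᵢ X)) with hH
  set T : Set H := {h : H | (h : X ≃ᵢ X) = f ^ m ∨ (h : X ≃ᵢ X) = g ^ m} with hT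
  set M : ℝ := 1 + dist o ((f ^ m) o) + dist o ((g ^ m) o) with hM
  have hd1 : 0 ≤ dist o ((f ^ m) o) := dist_nonneg
  have hd2 : 0 ≤ dist o ((g ^ m) o) := dist_nonneg
  have hM1 : 1 ≤ M := by linarith
  have hTM : ∀ y : H, y ∈ T ∨ y⁻¹ ∈ T → dist o ((y : X ≃ᵢ X) o) ≤ M := by
    have hpos : ∀ y : H, y ∈ T → dist o ((y : X ≃ᵢ X) o) ≤ M := by
      rintro y (hy | hy) <;> rw [hy] <;> linarith
    rintro y (hy | hy)
    · exact hpos y hy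
    · have := hpos _ hy
      rwa [Subgroup.coe_inv, dist_inv_apply] at this
  have hletter : ∀ l : Fin 2 × Bool, letter ![f ^ m, g ^ m] l ∈ H := by
    rintro ⟨i, b⟩
    have h1 : f ^ m ∈ H := Subgroup.subset_closure (by simp)
    have h2 : g ^ m ∈ H := Subgroup.subset_closure (by simp)
    fin_cases i <;> cases b
    exacts [H.inv_mem h1, h1, H.inv_mem h2, h2]
  -- The reduced word of `h₁⁻¹ * h₂`, read as a word in the generators of `H`.
  have hword : ∀ h₁ h₂ : H, ∃ l : List H, (∀ y ∈ l, y ∈ T ∨ y⁻¹ ∈ T) ∧ h₁ * l.prod = h₂ ∧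
      (l.length : ℝ) ≤ dist o (((h₁⁻¹ * h₂ : H) : X ≃ᵢ X) o) := by
    intro h₁ h₂
    obtain ⟨w, hw⟩ : ((h₁⁻¹ * h₂ : H) : X ≃ᵢ X) ∈ Φ.range := by
      rw [hrange]
      exact (h₁⁻¹ * h₂).2
    refine ⟨w.toWord.map fun l => ⟨letter ![f ^ m, g ^ m] l, hletter l⟩, ?_, ?_, ?_⟩
    · intro y hy
      obtain ⟨⟨i, b⟩, -, rfl⟩ := List.mem_map.1 hy
      fin_cases i <;> cases b
      · exact Or.inr (Or.inl (inv_inv _))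
      · exact Or.inl (Or.inl rfl)
      · exact Or.inr (Or.inr (inv_inv _))
      · exact Or.inl (Or.inr rfl)
    · rw [← eq_inv_mul_iff_mul_eq]
      apply Subtype.ext
      rw [← hw, Subgroup.val_list_prod, List.map_map, ← FreeGroup.mk_toWord (x := w), hΦ,
        FreeGroup.lift_mk, FreeGroup.mk_toWord]
      rfl
    · rw [← hw, List.length_map]
      exact hnorm w
  have horbit : ∀ h₁ h₂ : H, dist o (((h₁⁻¹ * h₂ : H) : X ≃ᵢ X) o)
      = dist ((h₁ : X ≃ᵢ X) o) ((h₂ : X ≃ᵢ X) o) := by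
    intro h₁ h₂
    rw [← (h₁ : X ≃ᵢ X).dist_eq, ← IsometryEquiv.mul_apply, ← Subgroup.coe_mul,
      mul_inv_cancel_left]
  refine ⟨M, hM1, 2 * dist x o, by positivity, fun h₁ h₂ => ?_⟩
  have hx1 := dist_triangle4 ((h₁ : X ≃ᵢ X) o) ((h₁ : X ≃ᵢ X) x) ((h₂ : X ≃ᵢ X) x)
    ((h₂ : X ≃ᵢ X) o)
  have hx2 := dist_triangle4 ((h₁ : X ≃ᵢ X) x) ((h₁ : X ≃ᵢ X) o) ((h₂ : X ≃ᵢ X) o)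
    ((h₂ : X ≃ᵢ X) x)
  simp only [IsometryEquiv.dist_eq, dist_comm o x] at hx1 hx2
  obtain ⟨l, hl, hlp, hlen⟩ := hword h₁ h₂
  rw [horbit] at hlen
  constructor
  · have h1 : (wdist T h₁ h₂ : ℝ) ≤ l.length := by exact_mod_cast wdist_le l hl hlp
    have h2 : 1 / M * (wdist T h₁ h₂ : ℝ) ≤ wdist T h₁ h₂ :=
      mul_le_of_le_one_left (Nat.cast_nonneg _) (by rw [div_le_one (by linarith)]; exact hM1)
    linarith
  · obtain ⟨l', hlen', hl', hlp'⟩ := exists_word l hl hlp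
    have h1 := displacement_prod_le (o := o) l' fun y hy => hTM y (hl' y hy)
    rw [hlen', eq_inv_mul_of_mul_eq hlp', horbit] at h1
    linarith

end HypPaper
end

section
/- Let f be an isometry of a hyperbolic geodesic metric space X such that f is not elliptic and f has at least two fixed points in ∂X (for the induced action of f on ∂X). Then f is loxodromic. -/
/-!
Slim triangles give Gromov's four-point condition for the product
`gp w x y = (d(w,x) + d(w,y) - d(x,y)) / 2`, and everything afterwards is expressed through such
products, so that no limits at infinity, bi-infinite geodesics or completions are needed.

Stability of quasigeodesics (`QG.gp_le`) takes the form: `(α i | α j)` based at `α l` is bounded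
for `i ≤ l ≤ j`. It comes from the logarithmic estimate `chain` applied to a point of a geodesic
that is farthest from the quasigeodesic. Consequently a quasigeodesic ray converges to a boundary
point in Gromov's sense (`QG.conv_self`), every power of `f` fixes the boundary points of `α` and
`β` in that sense (`conv_pow`), and non-asymptotic rays have bounded Gromov product near infinity
(`gp_bounded_of_not_asymp`).

Let `x` be a base point and `h n` the Busemann function of `α(∞)` at `f ^ n x`, relative to `x`.
As `f` fixes `α(∞)`, `h` is a quasimorphism, with defect `E = 8 * η` depending only on the
four-point constant. If `|h n| > E` for some `n`, then `h` grows linearly along the multiples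
of `n`; since `|h n|` is bounded by the displacement of `x` up to a constant, `f` is loxodromic.
Otherwise `h` is bounded. Since `f ^ n` fixes both boundary points, `(α | β)` based at `f ^ n x`
is bounded uniformly in `n`, i.e. the orbit stays near the coarse line from `α(∞)` to `β(∞)`; two points
near that line with nearly equal Busemann functions are close (`dist_le_of_gp`), so the orbit is
bounded and `f` is elliptic, which is excluded.
-/

open Set

namespace HypPaper

variable {X : Type*} [MetricSpace X]

/-- A (discrete) quasigeodesic ray in `X`. -/
def IsQGRay (α : ℕ → X) : Prop :=
  ∃ k : ℝ, 1 ≤ k ∧ ∃ ε : ℝ, 0 ≤ ε ∧ ∀ m n : ℕ,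
    (1 / k) * |(m : ℝ) - (n : ℝ)| - ε ≤ dist (α m) (α n) ∧
    dist (α m) (α n) ≤ k * |(m : ℝ) - (n : ℝ)| + ε

/-- The isometry `f` fixes the boundary point `α(∞)` determined by the quasigeodesic ray
`α`: the image ray `f ∘ α` is asymptotic to `α`. -/
def FixesRayClass (f : X ≃ᵢ X) (α : ℕ → X) : Prop :=
  AsympSets (range α) (range (⇑f ∘ α))

/-- The Gromov product `(x|y)_w` of `x` and `y` seen from the base point `w`. -/
noncomputable def gp (w x y : X) : ℝ := (dist w x + dist w y - dist x y) / 2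

/-- Gromov's four-point condition with constant `η`, with the minimum of
`(x|y)_w` and `(y|z)_w` written as a disjunction. -/
def FourPt (X : Type*) [MetricSpace X] (η : ℝ) : Prop :=
  ∀ w x y z : X, gp w x y ≤ gp w x z + η ∨ gp w y z ≤ gp w x z + η

/-- Two sequences converge to the same Gromov boundary point: their Gromov products tend to
infinity, jointly in both indices. -/
def Conv (a b : ℕ → X) : Prop :=
  ∀ (x : X) (M : ℝ), ∃ N : ℕ, ∀ m ≥ N, ∀ m' ≥ N, M ≤ gp x (a m) (b m')

/-- The quasigeodesic inequalities with constants `k`, `ε`. -/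
def QG (k ε : ℝ) (α : ℕ → X) : Prop :=
  ∀ m n : ℕ,
    (1 / k) * |(m : ℝ) - (n : ℝ)| - ε ≤ dist (α m) (α n) ∧
    dist (α m) (α n) ≤ k * |(m : ℝ) - (n : ℝ)| + ε

lemma gp_symm (w x y : X) : gp w x y = gp w y x := by
  unfold gp; rw [dist_comm x y]; ring

lemma gp_self (w x : X) : gp w x x = dist w x := by
  unfold gp; rw [dist_self]; ring

lemma gp_add (x y z : X) : gp x y z + gp y x z = dist x y := by
  unfold gp; rw [dist_comm y x]; ring

lemma gp_le_dist (w x y : X) : gp w x y ≤ dist w x := by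
  unfold gp; linarith [dist_triangle w x y]

lemma dist_sub_le_gp (w x y : X) : dist w x - dist x y ≤ gp w x y := by
  unfold gp; linarith [dist_triangle w y x, dist_comm x y]

lemma gp_base (w w' x y : X) : gp w x y ≤ gp w' x y + dist w w' := by
  unfold gp; linarith [dist_triangle w w' x, dist_triangle w w' y]

lemma gp_right (w x y y' : X) : gp w x y ≤ gp w x y' + dist y y' := by
  unfold gp; linarith [dist_triangle w y' y, dist_triangle x y y', dist_comm y y']

lemma gp_map (g : X ≃ᵢ X) (w x y : X) : gp (g w) (g x) (g y) = gp w x y := by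
  unfold gp; simp only [g.dist_eq]

/-! ### Slim triangles and the four-point condition -/

/-- Coarse connectedness of an interval: two sets covering `[0, L]`, one containing `0` and the
other `L`, have points at distance at most `1` from each other. -/
lemma exists_near {L : ℝ} (hL : 0 ≤ L) (A B : ℝ → Prop) (h0 : A 0) (h1 : B L)
    (hAB : ∀ t ∈ Icc 0 L, A t ∨ B t) :
    ∃ s ∈ Icc 0 L, ∃ t ∈ Icc 0 L, A s ∧ B t ∧ |s - t| ≤ 1 := by
  set S : Set ℝ := {t | t ∈ Icc 0 L ∧ A t} with hS
  have hne : S.Nonempty := ⟨0, ⟨le_rfl, hL⟩, h0⟩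
  have hbdd : BddAbove S := ⟨L, fun t ht => ht.1.2⟩
  obtain ⟨s, hs, hlt⟩ := exists_lt_of_lt_csSup hne (sub_one_lt (sSup S))
  by_cases h : s + 1 ≤ L
  · have hs1 : s + 1 ∈ Icc 0 L := ⟨by linarith [hs.1.1], h⟩
    refine ⟨s, hs.1, s + 1, hs1, hs.2, ?_, by simp⟩
    rcases hAB _ hs1 with h' | h'
    · have := le_csSup hbdd (show s + 1 ∈ S from ⟨hs1, h'⟩)
      linarith
    · exact h'
  · refine ⟨s, hs.1, L, ⟨hL, le_rfl⟩, hs.2, h1, ?_⟩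
    rw [abs_le]; constructor <;> linarith [hs.1.2]

lemma IsGeodSegment.dist_left {γ : ℝ → X} {x y : X} (h : IsGeodSegment γ x y) {t : ℝ}
    (ht : t ∈ Icc 0 (dist x y)) : dist x (γ t) = t := by
  have := h.2.2 0 ⟨le_rfl, dist_nonneg⟩ t ht
  rw [h.1] at this
  rw [this, zero_sub, abs_neg, abs_of_nonneg ht.1]

lemma IsGeodSegment.dist_right {γ : ℝ → X} {x y : X} (h : IsGeodSegment γ x y) {t : ℝ}
    (ht : t ∈ Icc 0 (dist x y)) : dist (γ t) y = dist x y - t := by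
  have := h.2.2 t ht (dist x y) ⟨dist_nonneg, le_rfl⟩
  rw [h.2.1] at this
  rw [this, abs_sub_comm, abs_of_nonneg (by linarith [ht.2])]

/-- A point of a geodesic segment is at least as far from `w` as the Gromov product of the
endpoints. -/
lemma gp_le_dist_geod {γ : ℝ → X} {x y : X} (h : IsGeodSegment γ x y) {t : ℝ}
    (ht : t ∈ Icc 0 (dist x y)) (w : X) : gp w x y ≤ dist w (γ t) := by
  have h1 := h.dist_left ht
  have h2 := h.dist_right ht
  unfold gp
  linarith [dist_triangle w (γ t) x, dist_triangle w (γ t) y, dist_comm x (γ t)]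

/-- Conversely some point of the segment is about that close to `w`: the point of `[x, z]` that is
near both `[x, w]` and `[w, z]`. -/
lemma exists_geod_dist_le {δ : ℝ} (hδ : 0 ≤ δ) (hG : GeodesicSpace X) (hs : SlimTriangles X δ)
    {h : ℝ → X} {x z : X} (hh : IsGeodSegment h x z) (w : X) :
    ∃ t ∈ Icc 0 (dist x z), dist w (h t) ≤ gp w x z + 2 * δ + 1 := by
  obtain ⟨p, hp⟩ := hG x w
  obtain ⟨q, hq⟩ := hG w z
  obtain ⟨s, hs1, t, ht1, ⟨u, hu, hu'⟩, ⟨v, hv, hv'⟩, hst⟩ :=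
    exists_near (L := dist x z) dist_nonneg
      (fun t => ∃ u ∈ Icc (0 : ℝ) (dist x w), dist (h t) (p u) ≤ δ)
      (fun t => ∃ u ∈ Icc (0 : ℝ) (dist w z), dist (h t) (q u) ≤ δ)
      ⟨0, ⟨le_rfl, dist_nonneg⟩, by rw [hh.1, hp.1, dist_self]; exact hδ⟩
      ⟨dist w z, ⟨dist_nonneg, le_rfl⟩, by rw [hh.2.1, hq.2.1, dist_self]; exact hδ⟩
      (by
        intro t ht
        obtain ⟨r, hr, hd⟩ := hs x w z p q h hp hq hh t ht
        rcases hr with ⟨u, hu, rfl⟩ | ⟨u, hu, rfl⟩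
        · exact Or.inl ⟨u, hu, hd⟩
        · exact Or.inr ⟨u, hu, hd⟩)
  refine ⟨s, hs1, ?_⟩
  have e1 := hp.dist_left hu
  have e2 := hp.dist_right hu
  have e3 := hq.dist_left hv
  have e4 := hq.dist_right hv
  have e5 := hh.dist_left hs1
  have e6 := hh.dist_right ht1
  have e7 := hh.2.2 s hs1 t ht1
  have := abs_le.1 hst
  unfold gp
  have t1 := dist_triangle w (p u) (h s)
  have t2 := dist_triangle x (p u) (h s)
  have t3 := dist_triangle w (q v) (h t)
  have t4 := dist_triangle (h t) (q v) z
  have t5 := dist_triangle w (h t) (h s)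
  rw [dist_comm (p u) (h s)] at t1 t2
  rw [dist_comm (q v) (h t)] at t3
  rw [dist_comm (h t) (h s)] at t5
  rw [dist_comm w (p u)] at t1
  have := dist_comm w x
  linarith

lemma fourPt_of_hyperbolic (hX : IsHyperbolicSpace X) : ∃ η : ℝ, 0 ≤ η ∧ FourPt X η := by
  obtain ⟨hG, δ, hδ, hs⟩ := hX
  refine ⟨3 * δ + 1, by linarith, fun w x y z => ?_⟩
  obtain ⟨p, hp⟩ := hG x y
  obtain ⟨q, hq⟩ := hG y z
  obtain ⟨h, hh⟩ := hG x z
  obtain ⟨t, ht, hd⟩ := exists_geod_dist_le hδ hG hs hh w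
  obtain ⟨r, hr, hrd⟩ := hs x y z p q h hp hq hh t ht
  have := dist_triangle w (h t) r
  rcases hr with ⟨u, hu, rfl⟩ | ⟨u, hu, rfl⟩
  · left; linarith [gp_le_dist_geod hp hu w]
  · right; linarith [gp_le_dist_geod hq hu w]

/-- In a four-point space, two points near a coarse segment `[a, b]` and at about the same distance
from `a` are close. -/
lemma dist_le_of_gp {η : ℝ} (h4 : FourPt X η) {a b y z : X} {C E : ℝ}
    (hy : gp y a b ≤ C) (hz : gp z a b ≤ C) (hyz : |dist y a - dist z a| ≤ E) :
    dist y z ≤ 2 * C + E + 2 * η := by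
  have := abs_le.1 hyz
  rcases h4 y a z b with h | h <;> unfold gp at * <;>
    linarith [dist_comm a z, dist_comm z b, dist_comm a b]

/-! ### Stability of quasigeodesics -/

/-- Chains of length at most `2 ^ m` lose at most `m * η` in the Gromov product. -/
lemma chain {η : ℝ} (hη : 0 ≤ η) (h4 : FourPt X η) (w : X) (x : ℕ → X) (K : ℝ) (m : ℕ) :
    ∀ a n : ℕ, 1 ≤ n → n ≤ 2 ^ m → (∀ i, a ≤ i → i < a + n → K ≤ gp w (x i) (x (i + 1))) →
      K ≤ gp w (x a) (x (a + n)) + m * η := by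
  induction m with
  | zero =>
    intro a n h1 h2 h
    obtain rfl : n = 1 := by simp at h2; omega
    simpa using h a le_rfl (by omega)
  | succ m ih =>
    intro a n h1 h2 h
    push_cast
    by_cases hn : n ≤ 2 ^ m
    · have := ih a n h1 hn h
      nlinarith
    · have hpos : 1 ≤ 2 ^ m := Nat.one_le_two_pow
      have i1 := ih a (2 ^ m) hpos le_rfl (fun i h3 h4 => h i h3 (by omega))
      have i2 := ih (a + 2 ^ m) (n - 2 ^ m) (by omega) (by rw [pow_succ] at h2; omega)
        (fun i h3 h4 => h i (by omega) (by omega))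
      rw [show a + 2 ^ m + (n - 2 ^ m) = a + n by omega] at i2
      rcases h4 w (x a) (x (a + 2 ^ m)) (x (a + n)) with h' | h' <;> nlinarith

/-- A quantity bounded by an affine function of its own logarithm is bounded. -/
lemma log_bound (k ε K η : ℝ) (hk : 1 ≤ k) (hη : 0 ≤ η) :
    ∃ C : ℝ, ∀ D : ℝ, (∀ m : ℕ, k * (6 * D + ε) ≤ 2 ^ m → D ≤ K + (m + 2) * η) → D ≤ C := by
  have hlim : ∀ᶠ m : ℕ in Filter.atTop, k * (6 * (K + (m + 3) * η) + ε) ≤ (2 : ℝ) ^ m := by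
    have h1 : Filter.Tendsto (fun m : ℕ => (m : ℝ) ^ 1 / 2 ^ m) Filter.atTop (nhds 0) :=
      tendsto_pow_const_div_const_pow_of_one_lt 1 (by norm_num)
    have h2 : Filter.Tendsto (fun m : ℕ => (m : ℝ) ^ 0 / 2 ^ m) Filter.atTop (nhds 0) :=
      tendsto_pow_const_div_const_pow_of_one_lt 0 (by norm_num)
    have h3 := (h1.const_mul (6 * k * η)).add (h2.const_mul (k * (6 * (K + 3 * η) + ε)))
    simp only [mul_zero, add_zero] at h3
    filter_upwards [h3.eventually (ge_mem_nhds (zero_lt_one))] with m hm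
    have hp : (0 : ℝ) < 2 ^ m := by positivity
    rw [pow_one, pow_zero, ← mul_div_assoc, ← mul_div_assoc, ← add_div, div_le_one hp] at hm
    linarith
  obtain ⟨M, hM⟩ := Filter.eventually_atTop.1 hlim
  refine ⟨K + (M + 2) * η, fun D hD => ?_⟩
  have hex : ∃ m : ℕ, k * (6 * D + ε) ≤ 2 ^ m :=
    (pow_unbounded_of_one_lt _ (by norm_num)).imp fun _ h => h.le
  classical
  have hspec := Nat.find_spec hex
  have hmin := fun m => Nat.find_min hex (m := m)
  set m := Nat.find hex
  have h1 := hD m hspec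
  by_cases hmM : m ≤ M
  · have : (m : ℝ) ≤ M := by exact_mod_cast hmM
    nlinarith
  · exfalso
    obtain ⟨m', hm'⟩ : ∃ m', m = m' + 1 := ⟨m - 1, by omega⟩
    apply hmin m' (by omega)
    refine le_trans ?_ (hM m' (by omega))
    rw [hm'] at h1
    push_cast at h1
    have : D ≤ K + (m' + 3) * η := by linarith
    gcongr

lemma QG.step {k ε : ℝ} {α : ℕ → X} (h : QG k ε α) (i : ℕ) :
    dist (α i) (α (i + 1)) ≤ k + ε := by
  have := (h i (i + 1)).2
  simpa using this

lemma QG.index_le {k ε : ℝ} (hk : 1 ≤ k) {α : ℕ → X} (h : QG k ε α) (i j : ℕ) :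
    |(i : ℝ) - j| ≤ k * (dist (α i) (α j) + ε) := by
  have h1 := (h i j).1
  have hk0 : 0 < k := by linarith
  rw [one_div, sub_le_iff_le_add, inv_mul_le_iff₀ hk0] at h1
  exact h1

/-- The chain estimate for the subpath of `α` between any two indices `p`, `q`, all of whose
points are at distance at least `D` from `w`. -/
lemma QG.chain {η k ε D : ℝ} (hη : 0 ≤ η) (h4 : FourPt X η) (hk : 1 ≤ k) (hε : 0 ≤ ε)
    {α : ℕ → X} (h : QG k ε α) (w : X) {i j : ℕ} (hw : ∀ l, i ≤ l → l ≤ j → D ≤ dist w (α l))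
    {p q : ℕ} (hp : i ≤ p ∧ p ≤ j) (hq : i ≤ q ∧ q ≤ j) (m : ℕ)
    (hm : |(p : ℝ) - q| ≤ 2 ^ m) : D - (k + ε) ≤ gp w (α p) (α q) + m * η := by
  wlog hpq : p ≤ q generalizing p q
  · rw [gp_symm]
    exact this hq hp (by rwa [abs_sub_comm]) (by omega)
  rcases hpq.eq_or_lt with rfl | hlt
  · rw [gp_self]
    have := hw p hp.1 hp.2
    have : 0 ≤ (m : ℝ) * η := by positivity
    linarith
  · obtain ⟨n, rfl⟩ : ∃ n, q = p + n := ⟨q - p, by omega⟩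
    refine HypPaper.chain hη h4 w α (D - (k + ε)) m p n (by omega) ?_ ?_
    · push_cast at hm
      rw [show (p : ℝ) - (p + n) = -n by ring, abs_neg, Nat.abs_cast] at hm
      exact_mod_cast hm
    · intro l h1 h2
      have := dist_sub_le_gp w (α l) (α (l + 1))
      have := hw l (by omega) (by omega)
      linarith [h.step l]

/-- A geodesic between two points of a quasigeodesic stays uniformly close to it. -/
lemma QG.geod_near {η k ε : ℝ} (hη : 0 ≤ η) (h4 : FourPt X η) (hk : 1 ≤ k) (hε : 0 ≤ ε)
    {α : ℕ → X} (h : QG k ε α) :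
    ∃ C : ℝ, 0 ≤ C ∧ ∀ (i j : ℕ), i ≤ j → ∀ γ : ℝ → X, IsGeodSegment γ (α i) (α j) →
      ∀ t ∈ Icc 0 (dist (α i) (α j)), ∃ l, i ≤ l ∧ l ≤ j ∧ dist (γ t) (α l) ≤ C := by
  obtain ⟨C, hC⟩ := log_bound k ε (k + ε) η hk hη
  refine ⟨max C 0, le_max_right _ _, fun i j hij γ hγ t ht => ?_⟩
  set L := dist (α i) (α j) with hL
  have hL0 : 0 ≤ L := dist_nonneg
  set S : Set X := α '' Icc i j with hS
  have hScpt : IsCompact S := ((finite_Icc i j).image α).isCompact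
  have hSne : S.Nonempty := ⟨α i, i, ⟨le_rfl, hij⟩, rfl⟩
  have hnear : ∀ x : X, ∃ l, i ≤ l ∧ l ≤ j ∧ dist x (α l) = Metric.infDist x S := by
    intro x
    obtain ⟨_, ⟨l, hl, rfl⟩, hd⟩ := hScpt.exists_infDist_eq_dist hSne x
    exact ⟨l, hl.1, hl.2, hd.symm⟩
  have hcont : ContinuousOn γ (Icc 0 L) := by
    have : LipschitzOnWith 1 γ (Icc 0 L) := by
      apply LipschitzOnWith.of_dist_le_mul
      intro s hs t ht
      rw [hγ.2.2 s hs t ht, Real.dist_eq]; simp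
    exact this.continuousOn
  -- `γ s` is a point of the geodesic farthest from the quasigeodesic, at distance `D` from it
  obtain ⟨s, hs, hmax⟩ := isCompact_Icc.exists_isMaxOn (nonempty_Icc.2 hL0)
    ((Metric.continuous_infDist_pt S).comp_continuousOn hcont)
  set D := Metric.infDist (γ s) S with hD
  have hmax' : ∀ u ∈ Icc 0 L, Metric.infDist (γ u) S ≤ D := fun u hu => hmax hu
  have hD0 : 0 ≤ D := Metric.infDist_nonneg
  have hw : ∀ l, i ≤ l → l ≤ j → D ≤ dist (γ s) (α l) := fun l h1 h2 =>
    Metric.infDist_le_dist_of_mem ⟨l, ⟨h1, h2⟩, rfl⟩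
  suffices D ≤ C by
    obtain ⟨l, h1, h2, h3⟩ := hnear (γ t)
    exact ⟨l, h1, h2, by rw [h3]; exact ((hmax' t ht).trans this).trans (le_max_left _ _)⟩
  apply hC
  intro m hm
  -- points `γ a`, `γ b` before and after `γ s`, either at distance `2 * D` or an endpoint
  have hy : ∃ a ∈ Icc 0 L, a ≤ s ∧ s - a ≤ 2 * D ∧ ∃ p, (i ≤ p ∧ p ≤ j) ∧
      dist (γ a) (α p) ≤ D ∧ D ≤ gp (γ s) (γ a) (α p) := by
    by_cases hc : 2 * D ≤ s
    · have ha : s - 2 * D ∈ Icc 0 L := ⟨by linarith, by linarith [hs.2]⟩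
      obtain ⟨p, h1, h2, h3⟩ := hnear (γ (s - 2 * D))
      have h3' := hmax' _ ha
      refine ⟨s - 2 * D, ha, by linarith, by linarith, p, ⟨h1, h2⟩, by linarith, ?_⟩
      have := dist_sub_le_gp (γ s) (γ (s - 2 * D)) (α p)
      rw [hγ.2.2 s hs _ ha, abs_of_nonneg (by linarith)] at this
      linarith
    · refine ⟨0, ⟨le_rfl, hL0⟩, hs.1, by linarith, i, ⟨le_rfl, hij⟩, ?_, ?_⟩
      · rw [hγ.1, dist_self]; exact hD0
      · rw [hγ.1, gp_self]; exact hw i le_rfl hij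
  have hz : ∃ b ∈ Icc 0 L, s ≤ b ∧ b - s ≤ 2 * D ∧ ∃ q, (i ≤ q ∧ q ≤ j) ∧
      dist (γ b) (α q) ≤ D ∧ D ≤ gp (γ s) (γ b) (α q) := by
    by_cases hc : s + 2 * D ≤ L
    · have ha : s + 2 * D ∈ Icc 0 L := ⟨by linarith [hs.1], by linarith⟩
      obtain ⟨p, h1, h2, h3⟩ := hnear (γ (s + 2 * D))
      have h3' := hmax' _ ha
      refine ⟨s + 2 * D, ha, by linarith, by linarith, p, ⟨h1, h2⟩, by linarith, ?_⟩
      have := dist_sub_le_gp (γ s) (γ (s + 2 * D)) (α p)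
      rw [hγ.2.2 s hs _ ha, abs_sub_comm, abs_of_nonneg (by linarith)] at this
      linarith
    · refine ⟨L, ⟨hL0, le_rfl⟩, hs.2, by linarith, j, ⟨hij, le_rfl⟩, ?_, ?_⟩
      · rw [hγ.2.1, dist_self]; exact hD0
      · rw [hγ.2.1, gp_self]; exact hw j hij le_rfl
  obtain ⟨a, ha, has, has', p, hp, hpd, hpg⟩ := hy
  obtain ⟨b, hb, hsb, hsb', q, hq, hqd, hqg⟩ := hz
  have hab : dist (γ a) (γ b) = b - a := by
    rw [hγ.2.2 a ha b hb, abs_sub_comm, abs_of_nonneg (by linarith)]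
  have hpq : dist (α p) (α q) ≤ 6 * D := by
    have t1 := dist_triangle (α p) (γ a) (α q)
    have t2 := dist_triangle (γ a) (γ b) (α q)
    rw [dist_comm (α p) (γ a)] at t1
    linarith
  have hpq' : |(p : ℝ) - q| ≤ 2 ^ m :=
    ((h.index_le hk p q).trans (by gcongr)).trans hm
  have hch := QG.chain hη h4 hk hε h (γ s) hw hp hq m hpq'
  have h0 : gp (γ s) (γ a) (γ b) = 0 := by
    unfold gp
    rw [hab, hγ.2.2 s hs a ha, hγ.2.2 s hs b hb, abs_of_nonneg (by linarith),
      abs_sub_comm, abs_of_nonneg (by linarith)]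
    ring
  have hmη : 0 ≤ (m : ℝ) * η := by positivity
  rw [gp_symm] at hqg
  rcases h4 (γ s) (γ a) (α p) (γ b) with h5 | h5
  · linarith
  · rcases h4 (γ s) (α p) (α q) (γ b) with h6 | h6 <;> linarith

/-- Stability of quasigeodesics, in terms of Gromov products. -/
lemma QG.gp_le {η k ε : ℝ} (hη : 0 ≤ η) (h4 : FourPt X η) (hG : GeodesicSpace X)
    (hk : 1 ≤ k) (hε : 0 ≤ ε) {α : ℕ → X} (h : QG k ε α) :
    ∃ C : ℝ, 0 ≤ C ∧ ∀ i l j : ℕ, i ≤ l → l ≤ j → gp (α l) (α i) (α j) ≤ C := by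
  obtain ⟨C, hC0, hC⟩ := h.geod_near hη h4 hk hε
  refine ⟨k * (k * (2 * C + 1 + ε)) + ε + C, by positivity, fun i l j hil hlj => ?_⟩
  obtain ⟨γ, hγ⟩ := hG (α i) (α j)
  -- the geodesic passes near both the past and the future of `α l` at nearby times
  obtain ⟨s, hs, t, ht, ⟨p, hp1, hp2⟩, ⟨q, hq1, hq2⟩, hst⟩ :=
    exists_near (L := dist (α i) (α j)) dist_nonneg
      (fun t => ∃ p, p ≤ l ∧ dist (γ t) (α p) ≤ C) (fun t => ∃ p, l ≤ p ∧ dist (γ t) (α p) ≤ C)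
      ⟨i, hil, by rw [hγ.1, dist_self]; exact hC0⟩
      ⟨j, hlj, by rw [hγ.2.1, dist_self]; exact hC0⟩
      (by
        intro t ht
        obtain ⟨p, h1, h2, h3⟩ := hC i j (hil.trans hlj) γ hγ t ht
        rcases le_total p l with h' | h'
        · exact Or.inl ⟨p, h', h3⟩
        · exact Or.inr ⟨p, h', h3⟩)
  have hpq : dist (α p) (α q) ≤ 2 * C + 1 := by
    have t1 := dist_triangle (α p) (γ s) (α q)
    have t2 := dist_triangle (γ s) (γ t) (α q)
    rw [hγ.2.2 s hs t ht] at t2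
    rw [dist_comm (α p) (γ s)] at t1
    linarith
  have hidx : |(p : ℝ) - q| ≤ k * (2 * C + 1 + ε) :=
    (h.index_le hk p q).trans (by gcongr)
  have hlp : |(l : ℝ) - p| ≤ k * (2 * C + 1 + ε) := by
    refine le_trans ?_ hidx
    have h1 : (p : ℝ) ≤ l := by exact_mod_cast hp1
    have h2 : (l : ℝ) ≤ q := by exact_mod_cast hq1
    rw [abs_of_nonneg (by linarith), abs_of_nonpos (by linarith)]
    linarith
  have hd : dist (α l) (α p) ≤ k * (k * (2 * C + 1 + ε)) + ε :=
    ((h l p).2).trans (by gcongr)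
  refine (gp_le_dist_geod hγ hs (α l)).trans ?_
  have := dist_triangle (α l) (α p) (γ s)
  rw [dist_comm (α p)] at this
  linarith

/-! ### Boundary points -/

lemma QG.exists_far {k ε : ℝ} (hk : 1 ≤ k) {α : ℕ → X} (h : QG k ε α) (x : X) (M : ℝ) :
    ∃ N : ℕ, ∀ m ≥ N, M ≤ dist x (α m) := by
  have hk0 : 0 < k := by linarith
  obtain ⟨N, hN⟩ := exists_nat_ge (k * (M + dist (α 0) x + ε))
  refine ⟨N, fun m hm => ?_⟩
  have h1 := h.index_le hk 0 m
  have hm' : (N : ℝ) ≤ m := by exact_mod_cast hm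
  rw [Nat.cast_zero, zero_sub, abs_neg, Nat.abs_cast] at h1
  have h2 : k * (M + dist (α 0) x + ε) ≤ k * (dist (α 0) (α m) + ε) := by linarith
  have h3 := le_of_mul_le_mul_left h2 hk0
  linarith [dist_triangle (α 0) x (α m)]

lemma QG.conv_self {k ε C : ℝ} (hk : 1 ≤ k) {α : ℕ → X} (h : QG k ε α)
    (hC : ∀ i l j : ℕ, i ≤ l → l ≤ j → gp (α l) (α i) (α j) ≤ C) : Conv α α := by
  intro x M
  obtain ⟨N, hN⟩ := h.exists_far hk (α 0) (M + C + dist (α 0) x)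
  have key : ∀ m ≥ N, ∀ m' ≥ m, M ≤ gp x (α m) (α m') := by
    intro m hm m' hm'
    have h1 := hC 0 m m' (Nat.zero_le _) hm'
    have h2 := gp_add (α 0) (α m) (α m')
    linarith [hN m hm, gp_base (α 0) x (α m) (α m')]
  refine ⟨N, fun m hm m' hm' => ?_⟩
  rcases le_total m m' with h' | h'
  · exact key m hm m' h'
  · rw [gp_symm]; exact key m' hm' m h'

lemma Conv.symm {a b : ℕ → X} (h : Conv a b) : Conv b a := by
  intro x M
  obtain ⟨N, hN⟩ := h x M
  exact ⟨N, fun m hm m' hm' => by rw [gp_symm]; exact hN m' hm' m hm⟩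

lemma Conv.trans {η : ℝ} (h4 : FourPt X η) {a b c : ℕ → X} (h : Conv a b) (h' : Conv b c) :
    Conv a c := by
  intro x M
  obtain ⟨N, hN⟩ := h x (M + η)
  obtain ⟨N', hN'⟩ := h' x (M + η)
  refine ⟨max N N', fun m hm m' hm' => ?_⟩
  have h1 := hN m (le_trans (le_max_left _ _) hm) (max N N') (le_max_left _ _)
  have h2 := hN' (max N N') (le_max_right _ _) m' (le_trans (le_max_right _ _) hm')
  rcases h4 x (a m) (b (max N N')) (c m') with h3 | h3 <;> linarith

lemma Conv.map {a b : ℕ → X} (h : Conv a b) (g : X ≃ᵢ X) : Conv (g ∘ a) (g ∘ b) := by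
  intro x M
  obtain ⟨N, hN⟩ := h (g.symm x) M
  refine ⟨N, fun m hm m' hm' => ?_⟩
  have := gp_map g (g.symm x) (a m) (b m')
  rw [g.apply_symm_apply] at this
  simp only [Function.comp_apply, this]
  exact hN m hm m' hm'

lemma conv_of_fixes {η k ε : ℝ} (h4 : FourPt X η) (hk : 1 ≤ k)
    {α : ℕ → X} (h : QG k ε α) (hc : Conv α α) (f : X ≃ᵢ X) (hf : FixesRayClass f α) :
    Conv (f ∘ α) α := by
  obtain ⟨R, -, hR⟩ := hf
  intro x M
  obtain ⟨N, hN⟩ := hc x (M + η)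
  -- `f (α m)` is near some `α n`; for `m` large, `n` must be at least `N`
  obtain ⟨P, hP⟩ : ∃ P : ℝ, ∀ n < N, dist x (α n) ≤ P := by
    obtain ⟨P, hP⟩ := ((finite_Iio N).image fun n => dist x (α n)).bddAbove
    exact ⟨P, fun n hn => hP ⟨n, hn, rfl⟩⟩
  obtain ⟨N', hN'⟩ := h.exists_far hk (f.symm x) (max (M + η + R) (P + R + 1))
  refine ⟨max N N', fun m hm m' hm' => ?_⟩
  obtain ⟨_, ⟨n, rfl⟩, hn⟩ := hR ((f ∘ α) m) ⟨m, rfl⟩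
  have hfar : max (M + η + R) (P + R + 1) ≤ dist x (f (α m)) := by
    have h1 := f.dist_eq (f.symm x) (α m)
    rw [f.apply_symm_apply] at h1
    rw [h1]
    exact hN' m (le_trans (le_max_right _ _) hm)
  have f1 := (le_max_left _ _).trans hfar
  have f2 := (le_max_right _ _).trans hfar
  simp only [Function.comp_apply] at hn ⊢
  have hnN : N ≤ n := by
    by_contra hlt
    have := hP n (by omega)
    linarith [dist_triangle x (α n) (f (α m))]
  have g1 := hN n hnN m' (le_trans (le_max_left _ _) hm')
  have g2 := dist_sub_le_gp x (f (α m)) (α n)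
  rw [dist_comm (f (α m))] at g2
  rcases h4 x (f (α m)) (α n) (α m') with h3 | h3 <;> linarith

lemma conv_pow {η : ℝ} (h4 : FourPt X η) {α : ℕ → X} (hc : Conv α α) {f : X ≃ᵢ X}
    (hf : Conv (f ∘ α) α) (n : ℕ) : Conv (⇑(f ^ n) ∘ α) α := by
  induction n with
  | zero => simpa using hc
  | succ n ih =>
    have := (ih.map f).trans h4 hf
    rwa [← Function.comp_assoc, ← IsometryEquiv.coe_mul, ← pow_succ'] at this

lemma conv_pow_inv {η : ℝ} (h4 : FourPt X η) {α : ℕ → X} (hc : Conv α α) {f : X ≃ᵢ X}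
    (hf : Conv (f ∘ α) α) (n : ℕ) : Conv (⇑(f ^ n)⁻¹ ∘ α) α := by
  have := (conv_pow h4 hc hf n).map (f ^ n)⁻¹
  rw [← Function.comp_assoc, ← IsometryEquiv.coe_mul, inv_mul_cancel] at this
  simpa using this.symm

/-- If the Gromov products of `α` and `β` are unbounded near infinity, then `α` stays close to `β`:
`α l` is near the first `β i` that is at least as far from `α 0`. -/
lemma near_of_gp_unbounded {η k ε Ca Cb : ℝ} (hη : 0 ≤ η) (h4 : FourPt X η)
    (hk : 1 ≤ k) (hε : 0 ≤ ε) {α β : ℕ → X} (hβ : QG k ε β)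
    (hCa : ∀ i l j : ℕ, i ≤ l → l ≤ j → gp (α l) (α i) (α j) ≤ Ca)
    (hCb : ∀ i l j : ℕ, i ≤ l → l ≤ j → gp (β l) (β i) (β j) ≤ Cb)
    (H : ∀ (x : X) (C : ℝ) (N : ℕ), ∃ m ≥ N, ∃ m' ≥ N, C < gp x (α m) (β m')) :
    ∃ R : ℝ, ∀ l, ∃ i, dist (α l) (β i) ≤ R := by
  set x := α 0 with hx
  set d := dist x (β 0) with hd
  have hd0 : 0 ≤ d := dist_nonneg
  refine ⟨2 * max (Ca + η) (Cb + d) + (d + (k + ε)) + 2 * η, fun l => ?_⟩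
  set t := dist x (α l) with ht
  obtain ⟨m, hm, m', hm', hgp⟩ := H x (t + |Ca| + η) l
  have a1 := hCa 0 l m (Nat.zero_le _) hm
  have a2 := gp_add x (α l) (α m)
  have a3 := gp_add x (α l) (β m')
  have hyp1 : gp (α l) x (β m') ≤ Ca + η := by
    have := gp_le_dist x (α l) (β m')
    have := neg_abs_le Ca
    rcases h4 x (α l) (α m) (β m') with h | h <;> linarith
  have far : t ≤ dist x (β m') := by
    have := gp_le_dist x (β m') (α m)
    rw [gp_symm] at this
    linarith [abs_nonneg Ca]
  -- first time that `β` is at distance at least `t` from `x`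
  have hex : ∃ i, t ≤ dist x (β i) := ⟨m', far⟩
  classical
  have hspec := Nat.find_spec hex
  have hle : Nat.find hex ≤ m' := Nat.find_min' hex far
  have hmin := fun i => Nat.find_min hex (m := i)
  set i := Nat.find hex
  refine ⟨i, ?_⟩
  have hup : dist x (β i) ≤ t + (d + (k + ε)) := by
    rcases Nat.eq_zero_or_pos i with h0 | h0
    · rw [h0]
      have : 0 ≤ t := dist_nonneg
      linarith
    · obtain ⟨i', hi'⟩ : ∃ i', i = i' + 1 := ⟨i - 1, by omega⟩
      have h1 := hmin i' (by omega)
      rw [hi']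
      linarith [dist_triangle x (β i') (β (i' + 1)), hβ.step i']
  have hyp2 : gp (β i) x (β m') ≤ Cb + d := by
    have b1 := hCb 0 i m' (Nat.zero_le _) hle
    have b2 := gp_right (β i) (β m') x (β 0)
    rw [gp_symm, gp_symm _ (β m')] at b2
    linarith
  refine dist_le_of_gp h4 (hyp1.trans (le_max_left _ _)) (hyp2.trans (le_max_right _ _)) ?_
  rw [dist_comm _ x, dist_comm _ x, abs_le]
  constructor <;> linarith

/-- Non-asymptotic quasigeodesic rays have bounded Gromov product near infinity. -/
lemma gp_bounded_of_not_asymp {η ka εa kb εb Ca Cb : ℝ} (hη : 0 ≤ η) (h4 : FourPt X η)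
    (hka : 1 ≤ ka) (hεa : 0 ≤ εa) (hkb : 1 ≤ kb) (hεb : 0 ≤ εb)
    {α β : ℕ → X} (hα : QG ka εa α) (hβ : QG kb εb β)
    (hCa : ∀ i l j : ℕ, i ≤ l → l ≤ j → gp (α l) (α i) (α j) ≤ Ca)
    (hCb : ∀ i l j : ℕ, i ≤ l → l ≤ j → gp (β l) (β i) (β j) ≤ Cb)
    (hne : ¬ AsympSets (range α) (range β)) :
    ∃ (x : X) (C : ℝ) (N : ℕ), ∀ m ≥ N, ∀ m' ≥ N, gp x (α m) (β m') ≤ C := by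
  by_contra! H
  apply hne
  obtain ⟨R, hR⟩ := near_of_gp_unbounded hη h4 hkb hεb hβ hCa hCb H
  obtain ⟨R', hR'⟩ := near_of_gp_unbounded hη h4 hka hεa hα hCb hCa (by
    intro x C N
    obtain ⟨m, hm, m', hm', h⟩ := H x C N
    exact ⟨m', hm', m, hm, by rwa [gp_symm]⟩)
  refine ⟨max R R', ?_, ?_⟩
  · rintro _ ⟨l, rfl⟩
    obtain ⟨i, hi⟩ := hR l
    exact ⟨_, ⟨i, rfl⟩, hi.trans (le_max_left _ _)⟩
  · rintro _ ⟨l, rfl⟩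
    obtain ⟨i, hi⟩ := hR' l
    exact ⟨_, ⟨i, rfl⟩, by rw [dist_comm]; exact hi.trans (le_max_right _ _)⟩

/-! ### The Busemann quasimorphism -/

/-- Differences of distances to a sequence converging to a boundary point are eventually constant
up to `2 * η`, and depend only on the boundary point. -/
lemma Conv.busemann {η : ℝ} (h4 : FourPt X η) {a b : ℕ → X} (h : Conv a b) (x y : X) :
    ∃ N : ℕ, ∀ m ≥ N, ∀ m' ≥ N,
      |(dist x (a m) - dist y (a m)) - (dist x (b m') - dist y (b m'))| ≤ 2 * η := by
  obtain ⟨N, hN⟩ := h x (dist x y + η + 1)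
  refine ⟨N, fun m hm m' hm' => ?_⟩
  have h0 := hN m hm m' hm'
  have t1 := dist_triangle x y (a m)
  have t2 := dist_triangle x y (b m')
  have c := dist_comm x y
  rw [abs_le]
  constructor
  · rcases h4 x (a m) (b m') y with h5 | h5 <;> unfold gp at * <;>
      linarith [dist_comm y (a m), dist_comm y (b m'), dist_comm (a m) (b m')]
  · rcases h4 x (b m') (a m) y with h5 | h5 <;> unfold gp at * <;>
      linarith [dist_comm y (a m), dist_comm y (b m'), dist_comm (a m) (b m')]

/-- A quasimorphism on `ℕ` with defect `E` that exceeds `E` somewhere grows linearly. -/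
lemma quasimorphism_growth {E : ℝ} {h : ℕ → ℝ} (hq : ∀ n p, |h (n + p) - h n - h p| ≤ E)
    (n : ℕ) (j : ℕ) : (j + 1) * (|h n| - E) + E ≤ |h ((j + 1) * n)| := by
  rcases abs_cases (h n) with ⟨e, he⟩ | ⟨e, he⟩
  · have key : ∀ j : ℕ, (j + 1) * (|h n| - E) + E ≤ h ((j + 1) * n) := by
      intro j
      induction j with
      | zero => simp [e]
      | succ j ih =>
        have := abs_le.1 (hq ((j + 1) * n) n)
        rw [show (j + 1) * n + n = (j + 1 + 1) * n by ring] at this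
        push_cast
        linarith
    exact (key j).trans (le_abs_self _)
  · have key : ∀ j : ℕ, (j + 1) * (|h n| - E) + E ≤ - h ((j + 1) * n) := by
      intro j
      induction j with
      | zero => simp [e]
      | succ j ih =>
        have := abs_le.1 (hq ((j + 1) * n) n)
        rw [show (j + 1) * n + n = (j + 1 + 1) * n by ring] at this
        push_cast
        linarith
    exact (key j).trans (neg_le_abs _)

lemma dist_pow_le (f : X ≃ᵢ X) (x : X) (n : ℕ) : dist ((f ^ n) x) x ≤ n * dist (f x) x := by
  induction n with
  | zero => simp
  | succ n ih =>
    have h1 := dist_triangle ((f ^ (n + 1)) x) (f x) x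
    rw [pow_succ', IsometryEquiv.mul_apply, f.dist_eq] at h1
    rw [pow_succ', IsometryEquiv.mul_apply]
    push_cast
    linarith

lemma dist_zpow (f : X ≃ᵢ X) (x : X) (m n : ℤ) :
    dist ((f ^ m) x) ((f ^ n) x) = dist ((f ^ (m - n).natAbs) x) x := by
  wlog hmn : n ≤ m generalizing m n
  · rw [dist_comm, this n m (by omega), ← Int.natAbs_neg, neg_sub]
  have h1 : f ^ m = f ^ n * f ^ (m - n).natAbs := by
    rw [← zpow_natCast, Int.natAbs_of_nonneg (by omega), ← zpow_add]
    congr 1; ring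
  rw [h1, IsometryEquiv.mul_apply, (f ^ n).dist_eq]

/-- Linear growth of an orbit along the multiples of some `n` suffices for being loxodromic. -/
lemma isLoxodromic_of_growth (f : X ≃ᵢ X) (x : X) (n : ℕ) (c A : ℝ) (hc : 0 < c) (hn : 0 < n)
    (hg : ∀ j : ℕ, j * c - A ≤ dist ((f ^ (j * n)) x) x) : IsLoxodromic f := by
  set d := dist (f x) x with hd
  have hd0 : 0 ≤ d := dist_nonneg
  have hn' : (0 : ℝ) < n := by exact_mod_cast hn
  set k := max (max 1 d) (n / c) with hk
  have hk1 : 1 ≤ k := (le_max_left _ _).trans (le_max_left _ _)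
  have hkd : d ≤ k := (le_max_right _ _).trans (le_max_left _ _)
  have hkn : 1 / k ≤ c / n := by
    rw [div_le_div_iff₀ (by linarith) hn']
    have := (div_le_iff₀ hc).1 (le_max_right (max 1 d) ((n : ℝ) / c))
    linarith
  refine ⟨x, k, hk1, |A| + c + n * d, by positivity, fun p q => ?_⟩
  rw [dist_zpow]
  have e : |(p : ℝ) - q| = ((p - q).natAbs : ℝ) := by
    rw [Nat.cast_natAbs]; push_cast; rfl
  rw [e]
  set N := (p - q).natAbs
  constructor
  · have hdm := Nat.div_add_mod N n
    have hr := Nat.mod_lt N hn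
    set j := N / n
    set r := N % n
    have hr' : (r : ℝ) ≤ n := by exact_mod_cast hr.le
    have hN : (N : ℝ) = n * j + r := by exact_mod_cast hdm.symm
    have h1 : 1 / k * N ≤ c / n * N := by gcongr
    have h2 : c / n * N ≤ c * j + c := by
      rw [hN, div_mul_eq_mul_div, div_le_iff₀ hn']
      nlinarith
    have h3 := hg j
    have h4 : dist ((f ^ (j * n)) x) x ≤ dist ((f ^ N) x) x + n * d := by
      have t := dist_triangle ((f ^ (j * n)) x) ((f ^ N) x) x
      have t2 : dist ((f ^ (j * n)) x) ((f ^ N) x) ≤ n * d := by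
        rw [← hdm, mul_comm n j, pow_add, IsometryEquiv.mul_apply, (f ^ (j * n)).dist_eq,
          dist_comm]
        exact (dist_pow_le f x r).trans (by gcongr)
      linarith
    linarith [le_abs_self A]
  · have h1 := dist_pow_le f x N
    have h2 : (N : ℝ) * d ≤ k * N := by rw [mul_comm]; gcongr
    have : 0 ≤ |A| + c + n * d := by positivity
    linarith

/-- Let `f` be an isometry of a hyperbolic geodesic metric space `X` such that `f` is not
elliptic and `f` fixes at least two distinct points of `∂X` (represented by two
non-asymptotic quasigeodesic rays).  Then `f` is loxodromic. -/
theorem loxodromic_of_nonelliptic_two_fixed_points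
    (hX : IsHyperbolicSpace X) (f : X ≃ᵢ X) (hnotell : ¬ IsElliptic f)
    (α β : ℕ → X) (hα : IsQGRay α) (hβ : IsQGRay β)
    (hdistinct : ¬ AsympSets (range α) (range β))
    (hfixα : FixesRayClass f α) (hfixβ : FixesRayClass f β) :
    IsLoxodromic f := by
  obtain ⟨η, hη, h4⟩ := fourPt_of_hyperbolic hX
  obtain ⟨ka, hka, εa, hεa, hα⟩ := hα
  obtain ⟨kb, hkb, εb, hεb, hβ⟩ := hβ
  change QG ka εa α at hα
  change QG kb εb β at hβ
  obtain ⟨Ca, -, hCa⟩ := hα.gp_le hη h4 hX.1 hka hεa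
  obtain ⟨Cb, -, hCb⟩ := hβ.gp_le hη h4 hX.1 hkb hεb
  have hαα := hα.conv_self hka hCa
  have hββ := hβ.conv_self hkb hCb
  have hfα := conv_of_fixes h4 hka hα hαα f hfixα
  have hfβ := conv_of_fixes h4 hkb hβ hββ f hfixβ
  obtain ⟨x, C, N₀, hC⟩ :=
    gp_bounded_of_not_asymp hη h4 hka hεa hkb hεb hα hβ hCa hCb hdistinct
  -- the whole orbit of `x` stays uniformly close to the coarse line from `α(∞)` to `β(∞)`
  have hline : ∀ n : ℕ, ∃ N : ℕ, ∀ m ≥ N,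
      gp ((f ^ n) x) (α m) (β m) ≤ C + 2 * η := by
    intro n
    obtain ⟨N₁, h1⟩ := (conv_pow_inv h4 hαα hfα n).symm x (C + η + 1)
    obtain ⟨N₂, h2⟩ := conv_pow_inv h4 hββ hfβ n x (C + 2 * η + 1)
    refine ⟨max N₀ (max N₁ N₂), fun m hm => ?_⟩
    have hm0 : m ≥ N₀ := le_trans (le_max_left _ _) hm
    have hm1 : m ≥ N₁ := le_trans (le_trans (le_max_left _ _) (le_max_right _ _)) hm
    have hm2 : m ≥ N₂ := le_trans (le_trans (le_max_right _ _) (le_max_right _ _)) hm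
    have h0 := hC m hm0 m hm0
    have h1 := h1 m hm1 m hm1
    have h2 := h2 m hm2 m hm2
    have e : gp ((f ^ n) x) (α m) (β m) = gp x ((f ^ n)⁻¹ (α m)) ((f ^ n)⁻¹ (β m)) := by
      rw [← gp_map (f ^ n)⁻¹, IsometryEquiv.inv_apply_self]
    simp only [Function.comp_apply] at h1 h2
    rw [e]
    rcases h4 x (α m) ((f ^ n)⁻¹ (α m)) (β m) with h5 | h5
    · linarith
    · rcases h4 x ((f ^ n)⁻¹ (α m)) ((f ^ n)⁻¹ (β m)) (β m) with h6 | h6 <;> linarith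
  -- the Busemann quasimorphism of `α(∞)` along the orbit
  have hbus : ∀ n : ℕ, ∃ (c : ℝ) (N : ℕ), ∀ m ≥ N,
      |(dist ((f ^ n) x) (α m) - dist x (α m)) - c| ≤ 2 * η := by
    intro n
    obtain ⟨N, hN⟩ := hαα.busemann h4 ((f ^ n) x) x
    exact ⟨_, N, fun m hm => hN m hm N le_rfl⟩
  choose h B hB using hbus
  have hquasi : ∀ n p, |h (n + p) - h n - h p| ≤ 8 * η := by
    intro n p
    obtain ⟨N, hN⟩ := (conv_pow_inv h4 hαα hfα n).busemann h4 ((f ^ p) x) x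
    set m := max N (max (B (n + p)) (max (B n) (B p))) with hm
    have i1 := abs_le.1 (hB (n + p) m (by simp [hm]))
    have i2 := abs_le.1 (hB n m (by simp [hm]))
    have i3 := abs_le.1 (hB p m (by simp [hm]))
    have i4 := abs_le.1 (hN m (by simp [hm]) m (by simp [hm]))
    have e1 : ∀ y, dist y ((⇑(f ^ n)⁻¹ ∘ α) m) = dist ((f ^ n) y) (α m) := by
      intro y
      rw [← (f ^ n).dist_eq, Function.comp_apply, IsometryEquiv.apply_inv_self]
    rw [e1, e1, ← IsometryEquiv.mul_apply, ← pow_add] at i4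
    rw [abs_le]
    constructor <;> linarith
  have hle : ∀ n, |h n| ≤ dist ((f ^ n) x) x + 2 * η := by
    intro n
    have i1 := abs_le.1 (hB n _ le_rfl)
    have i2 := abs_le.1 (abs_dist_sub_le ((f ^ n) x) x (α (B n)))
    rw [abs_le]
    constructor <;> linarith
  by_cases hbig : ∃ n, 8 * η < |h n|
  · obtain ⟨n, hn⟩ := hbig
    have hn0 : 0 < n := by
      rcases Nat.eq_zero_or_pos n with rfl | h0
      · have := hquasi 0 0
        simp only [add_zero, sub_self, zero_sub, abs_neg] at this
        linarith
      · exact h0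
    refine isLoxodromic_of_growth f x n (|h n| - 8 * η) (2 * η) (by linarith) hn0 fun j => ?_
    rcases j with _ | j
    · simp; linarith
    · have h1 := quasimorphism_growth hquasi n j
      have h2 := hle ((j + 1) * n)
      push_cast
      linarith
  · exfalso
    push Not at hbig
    apply hnotell
    have hbdd : ∀ n : ℕ, dist ((f ^ n) x) x ≤ 2 * (C + 2 * η) + 10 * η + 2 * η := by
      intro n
      obtain ⟨N, hN⟩ := hline n
      set m := max N (max (B n) N₀) with hm
      have h1 := hN m (by simp [hm])
      have h2 := hC m (by simp [hm]) m (by simp [hm])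
      have h3 := abs_le.1 (hB n m (by simp [hm]))
      have h5 := abs_le.1 (hbig n)
      refine dist_le_of_gp h4 h1 (by linarith) ?_
      rw [abs_le]
      constructor <;> linarith
    refine ⟨x, 2 * (C + 2 * η) + 10 * η + 2 * η, fun n => ?_⟩
    have := dist_zpow f x n 0
    rw [zpow_zero, IsometryEquiv.coe_one, id] at this
    rw [this]
    exact hbdd _

end HypPaper
end

section
/- Let G be a free group of rank m ≥ 2 with free basis S, and let w ∈ G \ [G,G]. Then the closure in ∂G of the set 𝒜 = { (wg)^∞ : g ∈ [G,G], and the product wg is reduced and the element wg is cyclically reduced } has nonempty interior in ∂G. -/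
/-!
Every boundary point whose ray starts with the reduced word of `w` is a limit of points of `𝒜`,
so the closure of `𝒜` contains the nonempty open cylinder of `w` (nonempty because `w ≠ 1`: repeat
the last letter of `w` forever).

To approximate such a point `ξ`, cut its ray after `w u`, with `u` a long nonempty word, and close
it up by a commutator: take `g = u x u⁻¹ x⁻¹` where `x = y z` is a word of two letters. As there
are at least four letters, `y` and `z` can be chosen so that the word `w u y z u⁻¹ z⁻¹ y⁻¹` is
reduced and cyclically reduced as written (`exists_commutator_word`). Then `(wg)^∞` exists
(`exists_periodic`) and shares the prefix `w u` with `ξ`.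
-/

open Set

namespace HypPaper

/-- An infinite word `ξ` in the letters `(Fin m) × Bool` is reduced if no letter is
immediately followed by its inverse. -/
def ReducedWord (m : ℕ) (ξ : ℕ → Fin m × Bool) : Prop :=
  ∀ n : ℕ, ¬ ((ξ (n + 1)).1 = (ξ n).1 ∧ (ξ (n + 1)).2 = !(ξ n).2)

/-- The Gromov boundary of the free group `𝔽_m = FreeGroup (Fin m)` (w.r.t. its standard
basis): the set of infinite reduced words, i.e. of geodesic rays from `1` in the Cayley
tree. -/
def FGBoundary (m : ℕ) := {ξ : ℕ → Fin m × Bool // ReducedWord m ξ}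

/-- The cylinder of boundary points whose geodesic ray from `1` starts with the reduced
word `w`. -/
def cylinder (m : ℕ) (w : List (Fin m × Bool)) : Set (FGBoundary m) :=
  {ξ | ∀ (i : ℕ) (h : i < w.length), ξ.1 i = w.get ⟨i, h⟩}

/-- The topology on `∂𝔽_m` generated by the cylinders; it is the topology of the visual
metric `d(ξ, η) = 2^{-(length of the common initial segment)}`. -/
instance (m : ℕ) : TopologicalSpace (FGBoundary m) :=
  TopologicalSpace.generateFrom {U | ∃ w, U = cylinder m w}

/-- The product `a * b` is reduced: no cancellation occurs, equivalently
`d(1, ab) = d(1, a) + d(a, ab)` in the word metric. -/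
def ReducedProd (m : ℕ) (a b : FreeGroup (Fin m)) : Prop :=
  (FreeGroup.toWord (a * b)).length
    = (FreeGroup.toWord a).length + (FreeGroup.toWord b).length

/-- `a` is cyclically reduced: the last letter of its reduced word is not the inverse of
the first one. -/
def CyclicallyReduced (m : ℕ) (a : FreeGroup (Fin m)) : Prop :=
  ∀ x y : Fin m × Bool, (FreeGroup.toWord a).head? = some x →
    (FreeGroup.toWord a).getLast? = some y → ¬ (y.1 = x.1 ∧ y.2 = !x.2)

/-- `ξ = a^∞`: for a nontrivial cyclically reduced `a`, the boundary point `a^∞` is the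
infinite word repeating the reduced word of `a` periodically. -/
def IsPowerLimit (m : ℕ) (a : FreeGroup (Fin m)) (ξ : FGBoundary m) : Prop :=
  0 < (FreeGroup.toWord a).length ∧
  ∀ (n : ℕ) (h : n % (FreeGroup.toWord a).length < (FreeGroup.toWord a).length),
    ξ.1 n = (FreeGroup.toWord a).get ⟨n % (FreeGroup.toWord a).length, h⟩

/-- With at least four letters available, three of them can be avoided. -/
lemma exists_letter {m : ℕ} (hm : 2 ≤ m) (a b c : Fin m × Bool) :
    ∃ y, y ≠ a ∧ y ≠ b ∧ y ≠ c := by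
  have h : ({a, b, c} : Finset (Fin m × Bool)).card < (Finset.univ : Finset (Fin m × Bool)).card := by
    refine lt_of_le_of_lt Finset.card_le_three ?_
    simp
    omega
  obtain ⟨y, -, hy⟩ := Finset.exists_mem_notMem_of_card_lt_card h
  simp at hy
  exact ⟨y, hy.1, hy.2.1, hy.2.2⟩

lemma isReduced_append {α : Type*} {A B : List (α × Bool)} :
    FreeGroup.IsReduced (A ++ B) ↔ FreeGroup.IsReduced A ∧ FreeGroup.IsReduced B ∧
      ∀ x ∈ A.getLast?, ∀ y ∈ B.head?, x.1 = y.1 → x.2 = y.2 :=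
  List.isChain_append

lemma isReduced_invRev {α : Type*} {A : List (α × Bool)} (h : FreeGroup.IsReduced A) :
    FreeGroup.IsReduced (FreeGroup.invRev A) := by
  rw [FreeGroup.isReduced_iff_not_step] at h ⊢
  intro L hL
  refine h (FreeGroup.invRev L) ?_
  rw [← FreeGroup.Red.step_invRev_iff, FreeGroup.invRev_invRev]
  exact hL

/-- If `q` is not the inverse letter of `p`, then `p` and `q` do not cancel. -/
lemma snd_eq_of_ne {α : Type*} {p q : α × Bool} (h : q ≠ (p.1, !p.2)) (e : p.1 = q.1) :
    p.2 = q.2 := by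
  by_contra hne
  refine h (Prod.ext e.symm ?_)
  rcases hp : p.2 <;> rcases hq : q.2 <;> simp_all

/-- If `p` and `q` are distinct letters, then `p` does not cancel with the inverse letter of `q`. -/
lemma snd_eq_not_of_ne {α : Type*} {p q : α × Bool} (h : p ≠ q) (e : p.1 = q.1) :
    p.2 = !q.2 := by
  by_contra hne
  refine h (Prod.ext e ?_)
  rcases hp : p.2 <;> rcases hq : q.2 <;> simp_all

open scoped commutatorElement in
/-- A reduced word `W U` extends to a reduced and cyclically reduced word `W U L` such that `U L`
represents an element of the commutator subgroup. -/
lemma exists_commutator_word {m : ℕ} (hm : 2 ≤ m) {W U : List (Fin m × Bool)}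
    (hW : W ≠ []) (hU : U ≠ []) (h : FreeGroup.IsReduced (W ++ U)) :
    ∃ L, FreeGroup.IsCyclicallyReduced (W ++ U ++ L) ∧
      FreeGroup.mk (U ++ L) ∈ commutator (FreeGroup (Fin m)) := by
  obtain ⟨a, ha⟩ : ∃ a, W.head? = some a := ⟨_, List.head?_eq_some_head hW⟩
  obtain ⟨f, hf⟩ : ∃ f, U.head? = some f := ⟨_, List.head?_eq_some_head hU⟩
  obtain ⟨l, hl⟩ : ∃ l, U.getLast? = some l := ⟨_, List.getLast?_eq_some_getLast hU⟩
  -- The four conditions on the ends of `x = y z`: no cancellation in `u x`, in `x u⁻¹`, in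
  -- `u⁻¹ x⁻¹`, nor between the last letter `y⁻¹` and the first letter `a` of `w`.
  obtain ⟨y, hy1, hy2, -⟩ := exists_letter hm (l.1, !l.2) a a
  obtain ⟨z, hz1, hz2, hz3⟩ := exists_letter hm l (f.1, !f.2) (y.1, !y.2)
  have hUr : FreeGroup.IsReduced U := (isReduced_append.1 h).2.1
  refine ⟨[y, z] ++ FreeGroup.invRev U ++ FreeGroup.invRev [y, z], ⟨?_, ?_⟩, ?_⟩
  · have hh : (FreeGroup.invRev U).head? = some (l.1, !l.2) := by
      simp [FreeGroup.invRev, hl]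
    have hg : (FreeGroup.invRev U).getLast? = some (f.1, !f.2) := by
      simp [FreeGroup.invRev, hf]
    have hyz : FreeGroup.IsReduced [y, z] := by
      simp only [FreeGroup.isReduced_cons_cons, FreeGroup.IsReduced.singleton, and_true]
      exact snd_eq_of_ne hz3
    refine isReduced_append.2 ⟨h, isReduced_append.2 ⟨isReduced_append.2
      ⟨hyz, isReduced_invRev hUr, ?_⟩, isReduced_invRev hyz, ?_⟩, ?_⟩
    · simp only [hh]
      simpa using snd_eq_not_of_ne hz1
    · simp only [List.getLast?_append, hg]
      simpa [FreeGroup.invRev] using snd_eq_of_ne hz2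
    · simp only [List.getLast?_append, hl]
      simpa using snd_eq_of_ne hy1
  · have hlast : (W ++ U ++ ([y, z] ++ FreeGroup.invRev U ++ FreeGroup.invRev [y, z])).getLast? =
        some (y.1, !y.2) := by
      simp only [List.getLast?_append]
      simp [FreeGroup.invRev]
    have hfirst : (W ++ U ++ ([y, z] ++ FreeGroup.invRev U ++ FreeGroup.invRev [y, z])).head? =
        some a := by
      simp [List.head?_append, ha]
    rw [hlast, hfirst]
    simpa using snd_eq_not_of_ne hy2
  · have : FreeGroup.mk (U ++ ([y, z] ++ FreeGroup.invRev U ++ FreeGroup.invRev [y, z])) =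
        ⁅FreeGroup.mk U, FreeGroup.mk [y, z]⁆ := by
      rw [commutatorElement_def, FreeGroup.inv_mk, FreeGroup.inv_mk]
      simp only [FreeGroup.mul_mk, List.append_assoc]
    rw [this]
    exact Subgroup.commutator_mem_commutator (Subgroup.mem_top _) (Subgroup.mem_top _)

/-- A nonempty cyclically reduced word `L` defines the boundary point `L L L ⋯`. -/
lemma exists_periodic {m : ℕ} {L : List (Fin m × Bool)} (hL : 0 < L.length)
    (h : FreeGroup.IsCyclicallyReduced L) :
    ∃ η : FGBoundary m, ∀ n, η.1 n = L[n % L.length]'(Nat.mod_lt _ hL) := by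
  refine ⟨⟨fun n => L[n % L.length]'(Nat.mod_lt _ hL), fun n => ?_⟩, fun n => rfl⟩
  rintro ⟨h1, h2⟩
  obtain ⟨hr, hc⟩ := h
  rw [FreeGroup.IsReduced, List.isChain_iff_getElem] at hr
  have hn := Nat.mod_lt n hL
  have key : (L[n % L.length]'(Nat.mod_lt _ hL)).2
      = (L[(n + 1) % L.length]'(Nat.mod_lt _ hL)).2 := by
    by_cases hlt : n % L.length + 1 < L.length
    · have e : (n + 1) % L.length = n % L.length + 1 := by
        rw [Nat.add_mod_eq_ite]
        have : 1 % L.length = 1 := Nat.mod_eq_of_lt (by omega)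
        rw [this, if_neg (by omega)]
      simp only [e] at h1 ⊢
      exact hr _ hlt h1.symm
    · have e : (n + 1) % L.length = 0 := by
        rw [← Nat.mod_add_mod]
        have : n % L.length + 1 = L.length := by omega
        rw [this, Nat.mod_self]
      have e' : n % L.length = L.length - 1 := by omega
      simp only [e, e'] at h1 ⊢
      refine hc _ ?_ _ ?_ h1.symm
      · rw [List.getLast?_eq_getElem?]; simp
      · rw [List.head?_eq_getElem?]; simp
  simp only at h2
  rw [key] at h2
  simp at h2

/-- Every neighbourhood of `ξ` contains all the boundary points that share a sufficiently long
prefix with `ξ`. -/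
lemma exists_prefix_subset {m : ℕ} {U : Set (FGBoundary m)} (hU : IsOpen U) :
    ∀ ξ ∈ U, ∃ N : ℕ, ∀ η : FGBoundary m, (∀ i < N, η.1 i = ξ.1 i) → η ∈ U := by
  change TopologicalSpace.GenerateOpen _ U at hU
  induction hU with
  | basic s hs =>
    obtain ⟨w, rfl⟩ := hs
    intro ξ hξ
    exact ⟨w.length, fun η hη i hi => (hη i hi).trans (hξ i hi)⟩
  | univ => exact fun _ _ => ⟨0, fun _ _ => trivial⟩
  | inter s t _ _ ihs iht =>
    intro ξ hξ
    obtain ⟨N, hN⟩ := ihs ξ hξ.1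
    obtain ⟨M, hM⟩ := iht ξ hξ.2
    exact ⟨max N M, fun η hη => ⟨hN η fun i hi => hη i (lt_max_of_lt_left hi),
      hM η fun i hi => hη i (lt_max_of_lt_right hi)⟩⟩
  | sUnion S _ ih =>
    rintro ξ ⟨s, hs, hξ⟩
    obtain ⟨N, hN⟩ := ih s hs ξ hξ
    exact ⟨N, fun η hη => ⟨s, hs, hN η hη⟩⟩

lemma isReduced_prefix {m : ℕ} (ξ : FGBoundary m) (n : ℕ) :
    FreeGroup.IsReduced (List.ofFn fun i : Fin n => ξ.1 i) := by
  rw [FreeGroup.IsReduced, List.isChain_iff_getElem]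
  intro i hi h
  simp only [List.getElem_ofFn] at h ⊢
  have := ξ.2 i
  grind

lemma cylinder_nonempty {m : ℕ} {W : List (Fin m × Bool)} (hW : W ≠ [])
    (h : FreeGroup.IsReduced W) : (cylinder m W).Nonempty := by
  rw [FreeGroup.IsReduced, List.isChain_iff_getElem] at h
  refine ⟨⟨fun n => if hn : n < W.length then W[n] else W.getLast hW, fun n => ?_⟩, fun i hi => ?_⟩
  · by_cases h1 : n + 1 < W.length
    · have h2 : n < W.length := by omega
      have := h n h1
      simp only [h1, h2, dif_pos]
      grind
    · -- From the last letter of `W` on, the ray is constant.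
      have hlast : (if hn : n < W.length then W[n] else W.getLast hW) = W.getLast hW := by
        split_ifs with h2
        · rw [List.getLast_eq_getElem]
          congr 1
          omega
        · rfl
      simp only [h1, hlast, dif_neg, not_false_iff]
      simp
  · simp [hi]

/-- Let `G = 𝔽_m` (`m ≥ 2`) and `w ∈ G \ [G,G]`.  Then the closure in `∂G` of
`𝒜 = { (wg)^∞ : g ∈ [G,G], wg reduced and cyclically reduced }` has nonempty interior. -/
theorem closure_of_power_limits_has_interior
    (m : ℕ) (hm : 2 ≤ m) (w : FreeGroup (Fin m))
    (hw : w ∉ commutator (FreeGroup (Fin m))) :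
    (interior (closure
      {ξ : FGBoundary m | ∃ g ∈ commutator (FreeGroup (Fin m)),
        ReducedProd m w g ∧ CyclicallyReduced m (w * g) ∧
        IsPowerLimit m (w * g) ξ})).Nonempty := by
  have hW : w.toWord ≠ [] := by
    rw [Ne, FreeGroup.toWord_eq_nil_iff]
    rintro rfl
    exact hw (one_mem _)
  refine (cylinder_nonempty hW FreeGroup.isReduced_toWord).mono
    (interior_maximal ?_ (TopologicalSpace.isOpen_generateFrom_of_mem ⟨_, rfl⟩))
  intro ξ hξ
  rw [mem_closure_iff]
  intro O hO hξO
  obtain ⟨N, hN⟩ := exists_prefix_subset hO ξ hξO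
  set W := w.toWord with hWdef
  -- The extra `1` makes the word `U` nonempty.
  set U : List (Fin m × Bool) := List.ofFn fun i : Fin (N + 1) => ξ.1 (W.length + i) with hUdef
  have hWU : W ++ U = List.ofFn fun i : Fin (W.length + (N + 1)) => ξ.1 i := by
    refine List.ext_getElem (by simp [hUdef, add_assoc]) fun i h1 h2 => ?_
    rw [List.getElem_append, List.getElem_ofFn]
    split_ifs with hi
    · exact (hξ i hi).symm
    · simp only [hUdef, List.getElem_ofFn]
      exact congrArg ξ.1 (by omega)
  obtain ⟨L, hL, hcomm⟩ := exists_commutator_word hm hW (U := U) (by simp [hUdef])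
    (hWU ▸ isReduced_prefix ξ _)
  have hprod : (w * FreeGroup.mk (U ++ L)).toWord = W ++ U ++ L := by
    have : w * FreeGroup.mk (U ++ L) = FreeGroup.mk (W ++ U ++ L) := by
      rw [List.append_assoc, ← FreeGroup.mul_mk (L₁ := W), hWdef, FreeGroup.mk_toWord]
    rw [this, FreeGroup.toWord_mk, hL.isReduced.reduce_eq]
  have hg : (FreeGroup.mk (U ++ L)).toWord = U ++ L := by
    rw [FreeGroup.toWord_mk]
    exact (hL.isReduced.infix ⟨W, [], by simp⟩).reduce_eq
  have hpos : 0 < (W ++ U ++ L).length := by simp [hUdef]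
  obtain ⟨η, hη⟩ := exists_periodic hpos hL
  refine ⟨η, hN η fun i hi => ?_, FreeGroup.mk (U ++ L), hcomm, ?_, ?_, ?_⟩
  · have hi' : i < (W ++ U).length := by
      simp only [hUdef, List.length_append, List.length_ofFn]
      omega
    have hi2 : i < (W ++ U ++ L).length := by
      rw [List.length_append]; omega
    rw [hη i]
    simp only [Nat.mod_eq_of_lt hi2]
    rw [List.getElem_append_left hi']
    simp only [hWU, List.getElem_ofFn]
  · rw [ReducedProd, hprod, hg]
    simp [hWdef]
  · rw [CyclicallyReduced, hprod]
    intro x y hx hy hxy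
    have := hL.2 y hy x hx hxy.1
    rw [this] at hxy
    simp at hxy
  · rw [IsPowerLimit, hprod]
    exact ⟨hpos, fun n _ => hη n⟩

end HypPaper
end

section
/- Let G be a free group of rank ≥ 2, and let E₁, …, E_l be finitely generated subgroups of G, each of infinite index in G. Let w ∈ G \ [G,G] and let A = { wg : g ∈ [G,G], the product wg is reduced and the element wg is cyclically reduced }. Then there are g₁, g₂ ∈ A and k ∈ ℕ such that: (1) ⟨g₁^k, g₂^k⟩ is a free subgroup of G of rank 2; and (2) ⟨g₁^k, g₂^k⟩ ∩ xE_i x⁻¹ = {1} for all x ∈ G and all 1 ≤ i ≤ l. -/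
/-!
Write a finitely generated subgroup `E` of the free group `G` as the stabiliser of the base point
of the Schreier graph on `G ⧸ E`. There is a finite set `C` of cosets (the vertices visited by the
generators) such that the path traced by the reduced word of any element of `E` stays in `C`
(`exists_core`): paths made of generators do, and cancelling a backtrack keeps a path in `C`.
If `E` has infinite index, every path can be continued without backtracking until it leaves `C`
(`exists_leaving`). Treating the finitely many pairs (subgroup, vertex of its core) one after the
other gives a reduced word `u` whose path leaves the core of every `E i`, whatever its starting
point (`exists_killing`). Such a `u` is not a subword of the reduced word of any element of any
`E i`.

For prescribed letters `f ≠ e` there is a reduced word `a`, of the form of a commutator, which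
begins with `f`, ends with `e`, and contains such a word `u`, as does its inverse
(`exists_petal`). As there are at least four letters, two such words `a₁`, `a₂` can be chosen with
different first letters and different last letters, all compatible with the given `w`. Then in
a nontrivial product of the elements `w a₁`, `w a₂` and their inverses the only cancellation is
that of `w⁻¹` against `w`, so the reduced word of the product contains one copy of `a₁^±1` or
`a₂^±1` for each factor (`spell`). Hence `w a₁` and `w a₂` freely generate a free group, and the
exponent `k = 1` works.

If a nontrivial element `p` of that group lies in `x (E i) x⁻¹`, then a high power `p ^ n` is
a product of more than `2 |x|` factors. Conjugation by `x` cannot destroy the middle of its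
reduced word, so the element `x⁻¹ p ^ n x` of `E i` still contains a word `u` as above, which is
impossible.
-/

open Pointwise

namespace HypPaper

open FreeGroup
open scoped commutatorElement

variable {α : Type*}

/-! ### Paths in the Schreier graph and finite cores -/

lemma suffix_append_cases {β : Type*} {Q A B : List β} (h : Q <:+ A ++ B) :
    Q <:+ B ∨ ∃ Q', Q' <:+ A ∧ Q = Q' ++ B := by
  obtain ⟨P, hP⟩ := h
  rcases List.append_eq_append_iff.1 hP with ⟨R, h1, h2⟩ | ⟨R, h1, h2⟩
  · exact Or.inr ⟨R, ⟨P, h1.symm⟩, h2⟩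
  · exact Or.inl ⟨R, h2.symm⟩

/-- The path in the Schreier graph `G ⧸ E` which starts at `d` and reads `W` stays in `C`. Since
`G` acts on `G ⧸ E` from the left, `W` is read from right to left, and the vertices visited
correspond to the suffixes of `W`. -/
def StaysIn (E : Subgroup (FreeGroup α)) (C : Set (FreeGroup α ⧸ E))
    (W : List (α × Bool)) (d : FreeGroup α ⧸ E) : Prop :=
  ∀ Q, Q <:+ W → mk Q • d ∈ C

lemma StaysIn.of_red {E : Subgroup (FreeGroup α)} {C : Set (FreeGroup α ⧸ E)}
    {W W' : List (α × Bool)} {d : FreeGroup α ⧸ E} (h : StaysIn E C W d) (hr : Red W W') :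
    StaysIn E C W' d := by
  induction hr with
  | refl => exact h
  | tail _ hs ih =>
    cases hs with
    | @not L₁ L₂ x b =>
      intro Q hQ
      rcases suffix_append_cases hQ with h2 | ⟨Q', h1, rfl⟩
      · exact ih Q (h2.trans ⟨L₁ ++ [(x, b), (x, !b)], by simp⟩)
      · have := ih (Q' ++ (x, b) :: (x, !b) :: L₂) (by
          obtain ⟨P, rfl⟩ := h1
          exact ⟨P, by simp⟩)
        have he : mk (Q' ++ (x, b) :: (x, !b) :: L₂) = mk (Q' ++ L₂) := Quot.sound Red.Step.not
        rwa [he] at this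

/-- A finite set of cosets playing the role of the Stallings core graph of `E`: reduced words of
elements of `E` never leave it. -/
lemma exists_core [DecidableEq α] (E : Subgroup (FreeGroup α)) (hE : E.FG) :
    ∃ C : Set (FreeGroup α ⧸ E), C.Finite ∧
      ∀ e ∈ E, StaysIn E C (toWord e) ((1 : FreeGroup α) : FreeGroup α ⧸ E) := by
  obtain ⟨T, hT⟩ := hE
  let o : FreeGroup α ⧸ E := ((1 : FreeGroup α) : FreeGroup α ⧸ E)
  have ho : ∀ e ∈ E, e • o = o := fun e he => by
    change ((e * 1 : FreeGroup α) : FreeGroup α ⧸ E) = _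
    rw [QuotientGroup.eq]
    simpa using he
  let F : Set (List (α × Bool)) := insert [] (⋃ t ∈ T, {Q | Q <:+ toWord t})
  have hF : F.Finite := by
    refine Set.Finite.insert _ (T.finite_toSet.biUnion fun t _ => ?_)
    refine (List.finite_toSet (toWord t).tails).subset fun Q hQ => ?_
    simpa using hQ
  refine ⟨(fun Q => mk Q • o) '' F, hF.image _, fun e he => ?_⟩
  -- by `StaysIn.of_red`, it is enough to find some word for `e`, reduced or not
  suffices h : ∃ W, mk W = e ∧ StaysIn E ((fun Q => mk Q • o) '' F) W o by
    obtain ⟨W, rfl, hW⟩ := h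
    exact hW.of_red reduce.red
  rw [← hT] at he
  induction he using Subgroup.closure_induction with
  | mem t ht =>
    refine ⟨toWord t, mk_toWord, fun Q hQ => ⟨Q, Or.inr ?_, rfl⟩⟩
    simp only [Set.mem_iUnion]
    exact ⟨t, ht, hQ⟩
  | one =>
    refine ⟨[], rfl, fun Q hQ => ⟨Q, Or.inl ?_, rfl⟩⟩
    simpa using hQ
  | mul a b ha hb iha ihb =>
    obtain ⟨A, rfl, hA⟩ := iha
    obtain ⟨B, rfl, hB⟩ := ihb
    refine ⟨A ++ B, mul_mk.symm, fun Q hQ => ?_⟩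
    rcases suffix_append_cases hQ with h2 | ⟨Q', h1, rfl⟩
    · exact hB Q h2
    · rw [← mul_mk, mul_smul, ho _ (hT ▸ hb)]
      exact hA Q' h1
  | inv a ha iha =>
    obtain ⟨A, rfl, hA⟩ := iha
    refine ⟨invRev A, inv_mk.symm, fun Q hQ => ?_⟩
    obtain ⟨P, hP⟩ := hQ
    have hA' : A = invRev Q ++ invRev P := by rw [← invRev_append, hP, invRev_invRev]
    have h1 := hA (invRev P) ⟨_, hA'.symm⟩
    -- both words lead to the same coset, since `A` is a loop at the base coset
    have h2 : mk Q • o = mk (invRev P) • o := by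
      conv_lhs => rw [← ho _ (hT ▸ ha), hA', ← mul_mk, ← inv_mk, mul_smul, smul_inv_smul]
    rw [h2]
    exact h1

/-- A reduced path in the Schreier graph of a subgroup of infinite index can be prolonged without
backtracking so that it ends outside a given finite set. Otherwise, let `d'` be the end of the path.
Going round a loop `t ^ n` at `d'`, where `t` is a generator other than that of the last step,
makes every direction at `d'` available, and then the whole graph lies in the finite set. -/
lemma exists_leaving [DecidableEq α] [Nontrivial α] (E : Subgroup (FreeGroup α))
    (hE : E.index = 0) (C : Set (FreeGroup α ⧸ E)) (hC : C.Finite) (d : FreeGroup α ⧸ E)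
    (u : List (α × Bool)) (hu : u ≠ []) (hur : IsReduced u) :
    ∃ v, IsReduced (v ++ u) ∧ mk (v ++ u) • d ∉ C := by
  by_contra! hcon
  obtain ⟨y, u', rfl⟩ := List.exists_cons_of_ne_nil hu
  obtain ⟨t, ht⟩ := exists_ne y.1
  set d' := mk (y :: u') • d with hd'
  have hrep : ∀ n, IsReduced (List.replicate n (t, true) ++ y :: u') := fun n => by
    refine List.isChain_append.2 ⟨List.isChain_replicate_of_rel n fun _ => rfl, hur, ?_⟩
    intro a ha b hb hab
    have := List.eq_of_mem_replicate (List.mem_of_getLast? ha)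
    simp at hb
    subst hb this
    exact absurd hab ht
  have hmk : ∀ n, mk (List.replicate n (t, true)) = FreeGroup.of t ^ n := fun n => by
    rw [← toWord_of_pow, mk_toWord]
  have htn : ∀ n : ℕ, (FreeGroup.of t ^ n) • d' ∈ C := fun n => by
    have := hcon _ (hrep n)
    rwa [← mul_mk, mul_smul, hmk] at this
  -- the powers of `t` move `d'` inside the finite set `C`, so some positive power fixes it
  obtain ⟨n, hn, hfix⟩ : ∃ n : ℕ, 0 < n ∧ (FreeGroup.of t ^ n) • d' = d' := by
    obtain ⟨i, -, j, -, hij, he⟩ := Set.infinite_univ.exists_ne_map_eq_of_mapsTo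
      (f := fun n : ℕ => (FreeGroup.of t ^ n) • d') (t := C) (fun n _ => htn n) hC
    wlog hlt : i < j generalizing i j
    · exact this j i hij.symm he.symm (by omega)
    refine ⟨j - i, by omega, ?_⟩
    have : (FreeGroup.of t ^ i) • ((FreeGroup.of t ^ (j - i)) • d') = (FreeGroup.of t ^ i) • d' := by
      rw [smul_smul, ← pow_add, Nat.add_sub_cancel' hlt.le]
      exact he.symm
    exact smul_left_cancel _ this
  -- a reduced word `g` is compatible with `u` if it ends in `t⁻¹`, and with `t ^ n u` otherwise
  have hall : ∀ g : FreeGroup α, g • d' ∈ C := by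
    intro g
    by_cases hl : (t, false) ∈ (toWord g).getLast?
    · have hred : IsReduced (toWord g ++ y :: u') := by
        refine List.isChain_append.2 ⟨isReduced_toWord, hur, ?_⟩
        intro a ha b hb hab
        simp only [Option.mem_def] at ha hb hl
        simp at hb
        rw [ha] at hl
        simp at hl
        subst hb hl
        exact absurd hab ht
      have := hcon _ hred
      rwa [← mul_mk, mul_smul, mk_toWord] at this
    · have hred : IsReduced (toWord g ++ (List.replicate n (t, true) ++ y :: u')) := by
        refine List.isChain_append.2 ⟨isReduced_toWord, hrep n, ?_⟩
        intro a ha b hb hab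
        obtain ⟨n, rfl⟩ := Nat.exists_eq_succ_of_ne_zero hn.ne'
        simp [List.replicate_succ] at hb
        subst hb
        obtain ⟨a1, a2⟩ := a
        simp at hab
        subst hab
        cases a2
        · exact absurd ha hl
        · rfl
      have := hcon (toWord g ++ List.replicate n (t, true)) (by simpa using hred)
      rw [← mul_mk, mul_smul, ← mul_mk, mul_smul, mk_toWord, hmk] at this
      rwa [← hd', hfix] at this
  have hfin : Finite (FreeGroup α ⧸ E) := by
    rw [← Set.finite_univ_iff]
    refine hC.subset fun c _ => ?_
    obtain ⟨g, rfl⟩ := MulAction.exists_smul_eq (FreeGroup α) d' c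
    exact hall g
  exact (Subgroup.index_ne_zero_of_finite (H := E)) hE

/-- Some reduced word ending in `u` leaves the given finite set of cosets of each `E i`,
wherever it starts. -/
lemma exists_killing [DecidableEq α] [Nontrivial α] {ι : Type*} [Finite ι]
    (E : ι → Subgroup (FreeGroup α)) (hE : ∀ i, (E i).index = 0)
    (C : ∀ i, Set (FreeGroup α ⧸ E i)) (hC : ∀ i, (C i).Finite)
    (u : List (α × Bool)) (hu : u ≠ []) (hur : IsReduced u) :
    ∃ v, IsReduced (v ++ u) ∧ ∀ i d, ¬ StaysIn (E i) (C i) (v ++ u) d := by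
  have hfin : (Set.univ.sigma C).Finite := by
    refine (Set.finite_iUnion fun i => (hC i).image (Sigma.mk i)).subset ?_
    rintro ⟨i, d⟩ ⟨-, hd⟩
    exact Set.mem_iUnion.2 ⟨i, d, hd, rfl⟩
  suffices h : ∀ s : Set (Σ i, FreeGroup α ⧸ E i), s.Finite →
      ∃ v, IsReduced (v ++ u) ∧ ∀ p ∈ s, ¬ StaysIn (E p.1) (C p.1) (v ++ u) p.2 by
    obtain ⟨v, hv, h⟩ := h _ hfin
    refine ⟨v, hv, fun i d hs => h ⟨i, d⟩ ⟨trivial, ?_⟩ hs⟩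
    -- the empty suffix shows that only starting points in `C i` matter
    have := hs [] (List.nil_suffix)
    rwa [← one_eq_mk, one_smul] at this
  intro s hs
  induction s, hs using Set.Finite.induction_on with
  | empty => exact ⟨[], hur, fun p hp => hp.elim⟩
  | @insert p s _ _ ih =>
    obtain ⟨v, hv, h⟩ := ih
    obtain ⟨v', hv', h'⟩ := exists_leaving (E p.1) (hE _) (C p.1) (hC _) p.2 (v ++ u)
      (by simp [hu]) hv
    refine ⟨v' ++ v, by simpa using hv', ?_⟩
    rintro q (rfl | hq) hst
    · exact h' (hst _ (by simp))
    · exact h q hq fun Q hQ => hst Q (hQ.trans ⟨v', by simp⟩)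

/-! ### Cancellation in products of reduced words -/

lemma isReduced_subword {L U : List (α × Bool)} (h : IsReduced L) (hU : U <:+: L) :
    IsReduced U := by
  obtain ⟨Z₁, Z₂, rfl⟩ := hU
  exact (List.isChain_append.1 (List.isChain_append.1 h).1).2.1

lemma isReduced_invRev_s19 [DecidableEq α] {L : List (α × Bool)} (h : IsReduced L) :
    IsReduced (invRev L) := by
  rw [isReduced_iff_reduce_eq, reduce_invRev, h.reduce_eq]

lemma toWord_mk_of_isReduced [DecidableEq α] {L : List (α × Bool)} (h : IsReduced L) :
    toWord (mk L) = L := by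
  rw [toWord_mk, h.reduce_eq]

/-- Left multiplication by a word `P` affects at most the first `P.length` letters of a reduced
word. -/
lemma exists_reduced_left [DecidableEq α] (P Z R : List (α × Bool)) (hr : IsReduced (Z ++ R))
    (hl : P.length ≤ Z.length) :
    ∃ Z', IsReduced (Z' ++ R) ∧ mk (P ++ (Z ++ R)) = mk (Z' ++ R) ∧
      Z.length ≤ Z'.length + P.length := by
  induction P with
  | nil => exact ⟨Z, hr, rfl, by simp⟩
  | cons p P ih =>
    simp only [List.length_cons] at hl
    obtain ⟨Z', h1, h2, h3⟩ := ih (by omega)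
    obtain ⟨z, Z', rfl⟩ : ∃ z Z'', Z' = z :: Z'' :=
      List.exists_cons_of_ne_nil (by rintro rfl; simp at h3; omega)
    have hm : mk (p :: P ++ (Z ++ R)) = mk (p :: z :: (Z' ++ R)) := by
      change mk ([p] ++ (P ++ (Z ++ R))) = mk ([p] ++ (z :: Z' ++ R))
      rw [← mul_mk, h2, mul_mk]
    by_cases hpz : p.1 = z.1 → p.2 = z.2
    · refine ⟨p :: z :: Z', isReduced_cons_cons.2 ⟨hpz, h1⟩, hm, ?_⟩
      simp at h3 ⊢; omega
    · refine ⟨Z', isReduced_subword h1 ⟨[z], [], by simp⟩, hm.trans ?_, ?_⟩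
      · obtain ⟨p1, p2⟩ := p
        obtain ⟨z1, z2⟩ := z
        obtain ⟨h4, h5⟩ := Classical.not_imp.1 hpz
        obtain rfl : z2 = !p2 := by cases p2 <;> cases z2 <;> simp_all
        simp only at h4
        subst h4
        exact Quot.sound Red.Step.cons_not
      · simp at h3 ⊢; omega

/-- Conjugating by `x` leaves the middle of a long reduced word intact. -/
lemma subword_of_conj [DecidableEq α] (x : FreeGroup α) (Z₁ U Z₂ : List (α × Bool))
    (hr : IsReduced (Z₁ ++ U ++ Z₂)) (h₁ : (toWord x).length ≤ Z₁.length)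
    (h₂ : (toWord x).length ≤ Z₂.length) :
    U <:+: toWord (x⁻¹ * mk (Z₁ ++ U ++ Z₂) * x) := by
  obtain ⟨Z, hZ, hm, -⟩ := exists_reduced_left (toWord x⁻¹) Z₁ (U ++ Z₂) (by simpa using hr)
    (by simpa using h₁)
  -- inversion turns the multiplication by `x` on the right into one on the left
  obtain ⟨Z', hZ', hm', -⟩ := exists_reduced_left (toWord x⁻¹) (invRev Z₂) (invRev (Z ++ U))
    (by simpa [invRev_append] using isReduced_invRev_s19 hZ) (by simpa using h₂)
  have key : x⁻¹ * mk (Z₁ ++ U ++ Z₂) * x = mk (Z ++ U ++ invRev Z') := by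
    rw [← mul_mk, mk_toWord] at hm hm'
    calc x⁻¹ * mk (Z₁ ++ U ++ Z₂) * x = mk (Z ++ (U ++ Z₂)) * x := by
          rw [← hm, List.append_assoc]
      _ = (x⁻¹ * mk (invRev Z₂ ++ invRev (Z ++ U)))⁻¹ := by
          rw [← invRev_append, ← inv_mk, mul_inv_rev, inv_inv, inv_inv, List.append_assoc]
      _ = mk (Z ++ U ++ invRev Z') := by
          rw [hm', inv_mk, invRev_append, invRev_invRev]
  have hred : IsReduced (Z ++ U ++ invRev Z') := by
    have := isReduced_invRev_s19 hZ'
    rwa [invRev_append, invRev_invRev] at this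
  rw [key, toWord_mk_of_isReduced hred]
  exact ⟨Z, invRev Z', rfl⟩

/-! ### Reduced words in the group generated by the two petals -/

section Spelling

variable (w : List (α × Bool)) (a : Fin 2 → List (α × Bool))

/-- The part of the spelling of a letter `x = xᵢ^±1` of `F₂` that is never cancelled: `aᵢ^±1`. -/
def block (x : Fin 2 × Bool) : List (α × Bool) :=
  if x.2 then a x.1 else invRev (a x.1)

/-- The part of the spelling of a letter `x` of `F₂` in front of its block, as `xᵢ ↦ w aᵢ`. -/
def lead (x : Fin 2 × Bool) : List (α × Bool) := if x.2 then w else []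

/-- What remains of `w^±1` between the blocks of consecutive letters `x`, `y` of a word in `F₂`
under `xᵢ ↦ w aᵢ`; the product `w⁻¹ w` between `xᵢ⁻¹` and `xⱼ` cancels. -/
def glue (x y : Fin 2 × Bool) : List (α × Bool) :=
  if x.2 then (if y.2 then w else []) else (if y.2 then [] else invRev w)

/-- The reduced spelling of the image of a reduced word of `F₂` under `xᵢ ↦ w aᵢ`, without the
initial `lead`. -/
def spell : List (Fin 2 × Bool) → List (α × Bool)
  | [] => []
  | [x] => block a x ++ (if x.2 then [] else invRev w)
  | x :: y :: L => block a x ++ (glue w x y ++ spell (y :: L))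

lemma spell_cons (x : Fin 2 × Bool) (L : List (Fin 2 × Bool)) :
    ∃ R, spell w a (x :: L) = block a x ++ R := by
  cases L with
  | nil => exact ⟨_, rfl⟩
  | cons y L => exact ⟨_, rfl⟩

/-- No cancellation occurs in `aᵢ w aⱼ`, nor in `aᵢ aⱼ⁻¹` and `aᵢ⁻¹ aⱼ` for `i ≠ j`. -/
structure PetalCondition : Prop where
  ne_nil : ∀ i, a i ≠ []
  through : ∀ i j, IsReduced (a i ++ w ++ a j)
  ends : ∀ i j, i ≠ j → IsReduced (a i ++ invRev (a j))
  starts : ∀ i j, i ≠ j → IsReduced (invRev (a i) ++ a j)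

variable {w a}

lemma PetalCondition.block_ne_nil (h : PetalCondition w a) (x : Fin 2 × Bool) :
    block a x ≠ [] := by
  have := h.ne_nil x.1
  unfold block
  split_ifs
  · exact this
  · rw [← List.length_pos_iff, invRev_length, List.length_pos_iff]
    exact this

lemma PetalCondition.glue_reduced [DecidableEq α] (h : PetalCondition w a) {x y : Fin 2 × Bool}
    (hxy : x.1 = y.1 → x.2 = y.2) : IsReduced (block a x ++ glue w x y ++ block a y) := by
  obtain ⟨i, b⟩ := x
  obtain ⟨j, c⟩ := y
  cases b <;> cases c <;> simp [block, glue] at hxy ⊢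
  · simpa [invRev_append] using isReduced_invRev_s19 (h.through j i)
  · exact h.starts i j hxy
  · exact h.ends i j hxy
  · simpa using h.through i j

lemma PetalCondition.spell_reduced [DecidableEq α] (h : PetalCondition w a)
    (L : List (Fin 2 × Bool)) (hL : IsReduced L) : IsReduced (spell w a L) := by
  induction L with
  | nil => exact IsReduced.nil
  | cons x L ih =>
    cases L with
    | nil =>
      obtain ⟨i, b⟩ := x
      cases b
      · have := isReduced_subword (U := w ++ a i) (h.through i i) ⟨a i, [], by simp⟩
        simpa [spell, block, invRev_append] using isReduced_invRev_s19 this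
      · have := isReduced_subword (U := a i) (h.through i i) ⟨[], w ++ a i, by simp⟩
        simpa [spell, block] using this
    | cons y L =>
      rw [isReduced_cons_cons] at hL
      have ih' := ih hL.2
      obtain ⟨R, hR⟩ := spell_cons w a y L
      have h1 := h.glue_reduced hL.1
      rw [hR] at ih'
      have := h1.append_overlap ih' (h.block_ne_nil y)
      simpa [spell, hR] using this

lemma PetalCondition.lead_spell_reduced [DecidableEq α] (h : PetalCondition w a)
    (x : Fin 2 × Bool) (L : List (Fin 2 × Bool)) (hL : IsReduced (x :: L)) :
    IsReduced (lead w x ++ spell w a (x :: L)) := by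
  have h1 := h.spell_reduced _ hL
  obtain ⟨R, hR⟩ := spell_cons w a x L
  rw [hR] at h1 ⊢
  rw [← List.append_assoc]
  refine IsReduced.append_overlap ?_ h1 (h.block_ne_nil x)
  obtain ⟨i, b⟩ := x
  cases b
  · simpa [lead] using isReduced_subword h1 ⟨[], R, by simp⟩
  · simpa [lead, block] using isReduced_subword (h.through i i) ⟨a i, [], by simp⟩

variable (w a) in
/-- The homomorphism `F₂ → G` given by `xᵢ ↦ w aᵢ`. -/
def petalHom : FreeGroup (Fin 2) →* FreeGroup α :=
  FreeGroup.lift fun i => mk (w ++ a i)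

lemma petalHom_cons (x : Fin 2 × Bool) (L : List (Fin 2 × Bool)) :
    petalHom w a (mk (x :: L)) = mk (lead w x ++ spell w a (x :: L)) := by
  have hx : ∀ x : Fin 2 × Bool, petalHom w a (mk [x]) =
      if x.2 then mk w * mk (a x.1) else (mk (a x.1))⁻¹ * (mk w)⁻¹ := by
    rintro ⟨i, b⟩
    cases b <;> simp [petalHom, lift_mk, ← mul_mk]
  induction L generalizing x with
  | nil =>
    rw [hx]
    obtain ⟨i, b⟩ := x
    cases b <;> simp [lead, spell, block, ← mul_mk, ← inv_mk]
  | cons y L ih =>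
    have : mk (x :: y :: L) = mk [x] * mk (y :: L) := by rw [mul_mk]; rfl
    rw [this, _root_.map_mul, ih, hx]
    obtain ⟨i, b⟩ := x
    obtain ⟨j, c⟩ := y
    cases b <;> cases c <;>
      simp only [lead, spell, block, glue, ← mul_mk, ← inv_mk, ← one_eq_mk, if_true, if_false,
        Bool.false_eq_true] <;> group

lemma PetalCondition.length_le_spell (h : PetalCondition w a) (L : List (Fin 2 × Bool)) :
    L.length ≤ (spell w a L).length := by
  induction L with
  | nil => simp
  | cons x L ih =>
    have := List.length_pos_iff.2 (h.block_ne_nil x)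
    cases L with
    | nil => simp [spell]; omega
    | cons y L => simp [spell] at ih ⊢; omega

lemma PetalCondition.spell_split (h : PetalCondition w a) (L₁ L₂ : List (Fin 2 × Bool))
    (x : Fin 2 × Bool) : ∃ Z₁ Z₂, spell w a (L₁ ++ x :: L₂) = Z₁ ++ block a x ++ Z₂ ∧
      L₁.length ≤ Z₁.length ∧ L₂.length ≤ Z₂.length := by
  induction L₁ with
  | nil =>
    cases L₂ with
    | nil => exact ⟨[], _, rfl, by simp, by simp⟩
    | cons y L =>
      refine ⟨[], _, rfl, by simp, ?_⟩
      have := h.length_le_spell (y :: L)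
      rw [List.length_append]
      omega
  | cons y L₁ ih =>
    obtain ⟨Z₁, Z₂, h1, h2, h3⟩ := ih
    obtain ⟨z, L', hL'⟩ : ∃ z L', L₁ ++ x :: L₂ = z :: L' :=
      List.exists_cons_of_ne_nil (by simp)
    have := List.length_pos_iff.2 (h.block_ne_nil y)
    refine ⟨block a y ++ (glue w y z ++ Z₁), Z₂, ?_, ?_, h3⟩
    · rw [List.cons_append, hL', spell, ← hL', h1]
      simp
    · simp; omega

lemma PetalCondition.injective [DecidableEq α] (h : PetalCondition w a) :
    Function.Injective (petalHom w a) := by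
  rw [injective_iff_map_eq_one]
  intro g hg
  by_contra hne
  obtain ⟨x, L, hL⟩ := List.exists_cons_of_ne_nil (mt toWord_eq_nil_iff.1 hne)
  have hr : IsReduced (x :: L) := hL ▸ isReduced_toWord
  rw [← mk_toWord (x := g), hL, petalHom_cons] at hg
  have h1 := toWord_mk_of_isReduced (h.lead_spell_reduced x L hr)
  rw [hg, toWord_one] at h1
  have h2 := h.length_le_spell (x :: L)
  have h3 := congrArg List.length h1
  simp at h2 h3
  omega

lemma exists_long_pow {g : FreeGroup (Fin 2)} (hg : g ≠ 1) (N : ℕ) :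
    ∃ n : ℕ, N < (toWord (g ^ n)).length := by
  by_contra! hcon
  have hinj : Function.Injective fun n : ℕ => toWord (g ^ n) :=
    toWord_injective.comp
      (injective_pow_iff_not_isOfFinOrder.2 (mt (isOfFinOrder_iff_eq_one g).1 hg))
  have hfin := (List.finite_length_le (Fin 2 × Bool) N).preimage hinj.injOn
  exact Set.infinite_univ (hfin.subset fun n _ => hcon n)

/-- Every conjugate of the cyclic group generated by a nontrivial element of the petal group
has an element whose reduced word contains a whole block. -/
lemma PetalCondition.exists_block_subword [DecidableEq α] (h : PetalCondition w a)
    {g : FreeGroup (Fin 2)} (hg : g ≠ 1) (x : FreeGroup α) :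
    ∃ (n : ℕ) (y : Fin 2 × Bool),
      block a y <:+: toWord (x⁻¹ * petalHom w a g ^ n * x) := by
  set N := (toWord x).length with hN
  -- the middle block has at least `|x|` blocks on either side
  obtain ⟨n, hn⟩ := exists_long_pow hg (2 * N)
  have hdec : toWord (g ^ n) = (toWord (g ^ n)).take N ++
      (toWord (g ^ n))[N] :: (toWord (g ^ n)).drop (N + 1) := by
    rw [List.getElem_cons_drop, List.take_append_drop]
  set y := (toWord (g ^ n))[N]
  obtain ⟨Z₁, Z₂, h1, h2, h3⟩ :=
    h.spell_split ((toWord (g ^ n)).take N) ((toWord (g ^ n)).drop (N + 1)) y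
  obtain ⟨z, L, hL⟩ := List.exists_cons_of_ne_nil (l := toWord (g ^ n))
    (by rintro he; simp [he] at hn)
  have hr : IsReduced (z :: L) := hL ▸ isReduced_toWord
  have h4 := petalHom_cons (w := w) (a := a) z L
  have h5 := h.lead_spell_reduced z L hr
  rw [← hL, mk_toWord, hdec, h1, map_pow] at h4
  rw [← hL, hdec, h1] at h5
  refine ⟨n, y, ?_⟩
  rw [h4, show lead w z ++ (Z₁ ++ block a y ++ Z₂) = (lead w z ++ Z₁) ++ block a y ++ Z₂ by simp]
  refine subword_of_conj x _ _ _ (by simpa using h5) ?_ ?_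
  · simp at h2 ⊢; omega
  · simp at h3 ⊢; omega

end Spelling

/-! ### Construction of the petals -/

/-- The inverse of a letter. -/
def letterInv (x : α × Bool) : α × Bool := (x.1, !x.2)

lemma compatible_of_ne_letterInv {x y : α × Bool} (h : y ≠ letterInv x) : x.1 = y.1 → x.2 = y.2 := by
  obtain ⟨x1, x2⟩ := x
  obtain ⟨y1, y2⟩ := y
  rintro h1
  simp only at h1
  subst h1
  by_contra hne
  exact h (by cases x2 <;> cases y2 <;> simp_all [letterInv])

lemma isReduced_append_s19 {A B : List (α × Bool)} (hA : IsReduced A) (hB : IsReduced B)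
    {x y : α × Bool} (hx : A.getLast? = some x) (hy : B.head? = some y) (h : y ≠ letterInv x) :
    IsReduced (A ++ B) := by
  refine List.isChain_append.2 ⟨hA, hB, ?_⟩
  intro x' hx' y' hy'
  rw [Option.mem_def, hx] at hx'
  rw [Option.mem_def, hy] at hy'
  cases hx'
  cases hy'
  exact compatible_of_ne_letterInv h

lemma letterInv_letterInv (x : α × Bool) : letterInv (letterInv x) = x := by simp [letterInv]

lemma head?_invRev {A : List (α × Bool)} : (invRev A).head? = A.getLast?.map letterInv := by
  simp [invRev]
  rfl

lemma getLast?_invRev {A : List (α × Bool)} : (invRev A).getLast? = A.head?.map letterInv := by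
  simp [invRev]
  rfl

/-- The word `f X⁻¹ f⁻¹ X` with `X = r u`, where `r` is a letter whose generator is not that of `f`,
is reduced as soon as `u` is reduced and does not end in `f`. -/
lemma exists_petal [DecidableEq α] [Nontrivial α] (u : List (α × Bool)) {f e : α × Bool}
    (hfe : f ≠ e) (hu : IsReduced u) (hue : u.getLast? = some e) :
    ∃ a : List (α × Bool), IsReduced a ∧ a.head? = some f ∧ a.getLast? = some e ∧
      mk a ∈ commutator (FreeGroup α) ∧ u <:+: a ∧ u <:+: invRev a := by
  obtain ⟨h, u', rfl⟩ := List.exists_cons_of_ne_nil (l := u) (by rintro rfl; simp at hue)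
  set u := h :: u' with hu'
  obtain ⟨t, ht⟩ := exists_ne f.1
  set X := (t, h.2) :: u with hX
  have hXr : IsReduced X := isReduced_cons_cons.2 ⟨fun _ => rfl, hu⟩
  have hXl : X.getLast? = some e := by rw [hX, hu', List.getLast?_cons_cons]; exact hue
  have hXh : X.head? = some (t, h.2) := rfl
  -- the sign of `r = (t, h.2)` agrees with that of the first letter `h` of `u`, so `r u` is reduced
  -- even if both have the same generator
  have r1 : IsReduced ([f] ++ invRev X) :=
    isReduced_append_s19 (x := f) (y := letterInv e) .singleton (isReduced_invRev_s19 hXr) rfl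
      (by rw [head?_invRev, hXl]; rfl) fun he => hfe (by
        rw [← letterInv_letterInv f, ← he, letterInv_letterInv])
  have r2 : IsReduced (invRev X ++ [letterInv f]) :=
    isReduced_append_s19 (x := letterInv (t, h.2)) (y := letterInv f) (isReduced_invRev_s19 hXr) .singleton
      (by rw [getLast?_invRev, hXh]; rfl) rfl fun he => ht (by
        have := congrArg Prod.fst he
        simp [letterInv] at this
        exact this.symm)
  have r3 : IsReduced ([letterInv f] ++ X) :=
    isReduced_append_s19 (x := letterInv f) (y := (t, h.2)) .singleton hXr rfl hXh fun he => ht (by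
      simpa [letterInv] using congrArg Prod.fst he)
  have hne : invRev X ≠ [] := by
    intro h0
    have := congrArg List.length h0
    simp [hX] at this
  refine ⟨[f] ++ invRev X ++ [letterInv f] ++ X, ?_, rfl, ?_, ?_, ?_, ?_⟩
  · exact ((r1.append_overlap r2 hne).append_overlap r3 (by simp))
  · rw [List.getLast?_append, hXl]; rfl
  · have : mk ([f] ++ invRev X ++ [letterInv f] ++ X) = ⁅mk [f], (mk X)⁻¹⁆ := by
      rw [commutatorElement_def, inv_inv, inv_mk, inv_mk, mul_mk, mul_mk, mul_mk]
      rfl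
    rw [this]
    exact Subgroup.commutator_mem_commutator (Subgroup.mem_top _) (Subgroup.mem_top _)
  · exact ⟨[f] ++ invRev X ++ [letterInv f] ++ [(t, h.2)], [], by simp [hX]⟩
  · refine ⟨invRev X ++ [f] ++ [(t, h.2)], [letterInv f], ?_⟩
    simp [hX, invRev, letterInv, Function.comp_def]

lemma exists_letter_s19 {m : ℕ} (hm : 2 ≤ m) (p q r : Fin m × Bool) :
    ∃ x : Fin m × Bool, x ≠ p ∧ x ≠ q ∧ x ≠ r := by
  have hlt : ({p, q, r} : Finset (Fin m × Bool)).card < Fintype.card (Fin m × Bool) := by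
    have := Finset.card_le_three (a := p) (b := q) (c := r)
    simp
    omega
  obtain ⟨x, hx⟩ := Finset.exists_mem_notMem_of_card_lt_card
    (s := {p, q, r}) (t := Finset.univ) (by simpa using hlt)
  simp at hx
  exact ⟨x, hx⟩

lemma StaysIn.subword {E : Subgroup (FreeGroup α)} {C : Set (FreeGroup α ⧸ E)}
    {U W : List (α × Bool)} {d : FreeGroup α ⧸ E} (h : StaysIn E C W d) (hU : U <:+: W) :
    ∃ d', StaysIn E C U d' := by
  obtain ⟨Z₁, Z₂, rfl⟩ := hU
  refine ⟨mk Z₂ • d, ?_⟩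
  rintro Q ⟨P, rfl⟩
  rw [← mul_smul, mul_mk]
  exact h _ ⟨Z₁ ++ P, by simp⟩

/-- **(Existence of pingpong pairs.)**  Let `G = 𝔽_m` (`m ≥ 2`) and let `E₁, …, E_l` be
finitely generated subgroups of infinite index in `G`.  Let `w ∈ G \ [G,G]` and
`A = { wg : g ∈ [G,G], wg reduced and cyclically reduced }`.  Then there are
`g₁, g₂ ∈ A` and `k ∈ ℕ` such that `⟨g₁ᵏ, g₂ᵏ⟩ ≅ 𝔽₂` and `⟨g₁ᵏ, g₂ᵏ⟩` meets every
conjugate `x Eᵢ x⁻¹` trivially. -/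
theorem pingpong_pair_exists
    (m : ℕ) (hm : 2 ≤ m)
    (l : ℕ) (E : Fin l → Subgroup (FreeGroup (Fin m)))
    (hEfg : ∀ i, (E i).FG)
    (hEinf : ∀ i, (E i).index = 0)
    (w : FreeGroup (Fin m)) (hw : w ∉ commutator (FreeGroup (Fin m))) :
    ∃ g₁ g₂ : FreeGroup (Fin m),
      (∃ a ∈ commutator (FreeGroup (Fin m)),
        ReducedProd m w a ∧ CyclicallyReduced m (w * a) ∧ g₁ = w * a) ∧
      (∃ a ∈ commutator (FreeGroup (Fin m)),
        ReducedProd m w a ∧ CyclicallyReduced m (w * a) ∧ g₂ = w * a) ∧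
      ∃ k : ℕ, 0 < k ∧
        Nonempty (Subgroup.closure ({g₁ ^ k, g₂ ^ k} : Set (FreeGroup (Fin m)))
          ≃* FreeGroup (Fin 2)) ∧
        ∀ (x : FreeGroup (Fin m)) (i : Fin l),
          Subgroup.closure ({g₁ ^ k, g₂ ^ k} : Set (FreeGroup (Fin m)))
            ⊓ ConjAct.toConjAct x • E i = ⊥ := by
  have : Nontrivial (Fin m) := Fin.nontrivial_iff_two_le.2 hm
  choose C hC hCE using fun i => exists_core (E i) (hEfg i)
  -- `s` and `z` are the first and the last letter of `w`
  set W := toWord w with hW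
  have hWr : IsReduced W := isReduced_toWord
  have hWne : W ≠ [] := by
    intro h
    rw [hW, toWord_eq_nil_iff] at h
    exact hw (h ▸ one_mem _)
  obtain ⟨s, hs⟩ : ∃ s, W.head? = some s := ⟨_, List.head?_eq_some_head hWne⟩
  obtain ⟨z, hz⟩ : ∃ z, W.getLast? = some z := ⟨_, List.getLast?_eq_some_getLast hWne⟩
  -- `fᵢ` and `eᵢ` will be the first and the last letter of `aᵢ`
  obtain ⟨f₁, hf₁, -⟩ := exists_letter_s19 hm (letterInv z) (letterInv z) (letterInv z)
  obtain ⟨f₂, hf₂, hff, -⟩ := exists_letter_s19 hm (letterInv z) f₁ f₁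
  obtain ⟨e₁, he₁, hef₁, -⟩ := exists_letter_s19 hm (letterInv s) f₁ f₁
  obtain ⟨e₂, he₂, hef₂, hee⟩ := exists_letter_s19 hm (letterInv s) f₂ e₁
  have main : ∀ f e : Fin m × Bool, f ≠ e → ∃ a : List (Fin m × Bool),
      IsReduced a ∧ a.head? = some f ∧ a.getLast? = some e ∧
      mk a ∈ commutator (FreeGroup (Fin m)) ∧
      (∀ i d, ¬ StaysIn (E i) (C i) a d) ∧ ∀ i d, ¬ StaysIn (E i) (C i) (invRev a) d := by
    intro f e hfe
    obtain ⟨v, hv, hk⟩ := exists_killing E hEinf C hC [e] (by simp) .singleton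
    obtain ⟨a, h1, h2, h3, h4, h5, h6⟩ := exists_petal (v ++ [e]) hfe hv (by simp)
    refine ⟨a, h1, h2, h3, h4, fun i d hst => ?_, fun i d hst => ?_⟩
    · obtain ⟨d', hd'⟩ := hst.subword h5
      exact hk i d' hd'
    · obtain ⟨d', hd'⟩ := hst.subword h6
      exact hk i d' hd'
  obtain ⟨a₁, hr₁, hh₁, hl₁, hc₁, hk₁, hk₁'⟩ := main f₁ e₁ hef₁.symm
  obtain ⟨a₂, hr₂, hh₂, hl₂, hc₂, hk₂, hk₂'⟩ := main f₂ e₂ hef₂.symm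
  have hWa : ∀ a : List (Fin m × Bool), ∀ f, IsReduced a → a.head? = some f → f ≠ letterInv z →
      IsReduced (W ++ a) := fun a f hr hh hf => isReduced_append_s19 hWr hr hz hh hf
  have hmem : ∀ (a : List (Fin m × Bool)) (f e : Fin m × Bool), IsReduced a →
      a.head? = some f → a.getLast? = some e → f ≠ letterInv z → e ≠ letterInv s →
      mk a ∈ commutator (FreeGroup (Fin m)) →
      ∃ b ∈ commutator (FreeGroup (Fin m)),
        ReducedProd m w b ∧ CyclicallyReduced m (w * b) ∧ mk (W ++ a) = w * b := by
    intro a f e hr hh hl hf he hc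
    have hwa : w * mk a = mk (W ++ a) := by rw [← mul_mk, hW, mk_toWord]
    refine ⟨mk a, hc, ?_, ?_, hwa.symm⟩
    · rw [ReducedProd, hwa, toWord_mk_of_isReduced (hWa a f hr hh hf),
        toWord_mk_of_isReduced hr, List.length_append]
    · intro x y hx hy hxy
      rw [hwa, toWord_mk_of_isReduced (hWa a f hr hh hf)] at hx hy
      rw [List.head?_append, hs] at hx
      rw [List.getLast?_append, hl] at hy
      simp at hx hy
      subst hx hy
      exact he (Prod.ext hxy.1 hxy.2)
  have petals : PetalCondition W ![a₁, a₂] := by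
    have hthrough : ∀ (a b : List (Fin m × Bool)) (f e : Fin m × Bool), IsReduced a →
        IsReduced b → a.getLast? = some e → b.head? = some f → e ≠ letterInv s → f ≠ letterInv z →
        IsReduced (a ++ W ++ b) := by
      intro a b f e ha hb hl hh he hf
      refine IsReduced.append_overlap ?_ (hWa b f hb hh hf) hWne
      exact isReduced_append_s19 ha hWr hl hs fun h => he (by rw [h, letterInv_letterInv])
    have hends : ∀ (a b : List (Fin m × Bool)) (e e' : Fin m × Bool), IsReduced a →
        IsReduced b → a.getLast? = some e → b.getLast? = some e' → e ≠ e' →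
        IsReduced (a ++ invRev b) := by
      intro a b e e' ha hb he he' hne
      refine isReduced_append_s19 ha (isReduced_invRev_s19 hb) he (y := letterInv e')
        (by rw [head?_invRev, he']; rfl) fun h => hne ?_
      rw [← letterInv_letterInv e, ← h, letterInv_letterInv]
    have hstarts : ∀ (a b : List (Fin m × Bool)) (f f' : Fin m × Bool), IsReduced a →
        IsReduced b → a.head? = some f → b.head? = some f' → f ≠ f' →
        IsReduced (invRev a ++ b) := by
      intro a b f f' ha hb hf hf' hne
      refine isReduced_append_s19 (isReduced_invRev_s19 ha) hb (x := letterInv f)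
        (by rw [getLast?_invRev, hf]; rfl) hf' fun h => hne ?_
      rw [h, letterInv_letterInv]
    refine ⟨?_, ?_, ?_, ?_⟩
    · refine Fin.forall_fin_two.2 ⟨?_, ?_⟩
      · rintro h; simp at h; simp [h] at hh₁
      · rintro h; simp at h; simp [h] at hh₂
    · simp only [Fin.forall_fin_two]
      exact ⟨⟨hthrough a₁ a₁ f₁ e₁ hr₁ hr₁ hl₁ hh₁ he₁ hf₁,
        hthrough a₁ a₂ f₂ e₁ hr₁ hr₂ hl₁ hh₂ he₁ hf₂⟩,
        hthrough a₂ a₁ f₁ e₂ hr₂ hr₁ hl₂ hh₁ he₂ hf₁,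
        hthrough a₂ a₂ f₂ e₂ hr₂ hr₂ hl₂ hh₂ he₂ hf₂⟩
    · simp only [Fin.forall_fin_two]
      exact ⟨⟨fun h => absurd rfl h, fun _ => hends a₁ a₂ e₁ e₂ hr₁ hr₂ hl₁ hl₂ hee.symm⟩,
        fun _ => hends a₂ a₁ e₂ e₁ hr₂ hr₁ hl₂ hl₁ hee, fun h => absurd rfl h⟩
    · simp only [Fin.forall_fin_two]
      exact ⟨⟨fun h => absurd rfl h, fun _ => hstarts a₁ a₂ f₁ f₂ hr₁ hr₂ hh₁ hh₂ hff.symm⟩,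
        fun _ => hstarts a₂ a₁ f₂ f₁ hr₂ hr₁ hh₂ hh₁ hff, fun h => absurd rfl h⟩
  have hblock : ∀ y i d, ¬ StaysIn (E i) (C i) (block ![a₁, a₂] y) d := by
    rintro ⟨j, b⟩ i d
    fin_cases j <;> cases b
    · exact hk₁' i d
    · exact hk₁ i d
    · exact hk₂' i d
    · exact hk₂ i d
  have hrange : Subgroup.closure
      ({mk (W ++ a₁) ^ 1, mk (W ++ a₂) ^ 1} : Set (FreeGroup (Fin m))) = (petalHom W ![a₁, a₂]).range := by
    rw [petalHom, range_lift_eq_closure]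
    congr 1
    ext g
    simp [Fin.exists_fin_two, eq_comm]
  refine ⟨mk (W ++ a₁), mk (W ++ a₂), hmem a₁ f₁ e₁ hr₁ hh₁ hl₁ hf₁ he₁ hc₁,
    hmem a₂ f₂ e₂ hr₂ hh₂ hl₂ hf₂ he₂ hc₂, 1, one_pos, ?_, ?_⟩
  · rw [hrange]
    exact ⟨(MonoidHom.ofInjective petals.injective).symm⟩
  · intro x i
    rw [hrange, eq_bot_iff]
    rintro _ ⟨⟨h, rfl⟩, hx⟩
    replace hx := Subgroup.mem_pointwise_smul_iff_inv_smul_mem.1 hx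
    rw [Subgroup.mem_bot]
    by_contra hne
    have hh : h ≠ 1 := by rintro rfl; exact hne (_root_.map_one _)
    obtain ⟨n, y, hy⟩ := petals.exists_block_subword hh x
    have hE : x⁻¹ * petalHom W ![a₁, a₂] h ^ n * x ∈ E i := by
      have := pow_mem hx n
      rw [← ConjAct.toConjAct_inv, ConjAct.toConjAct_smul, inv_inv] at this
      rwa [show x⁻¹ * petalHom W ![a₁, a₂] h ^ n * x = (x⁻¹ * petalHom W ![a₁, a₂] h * x) ^ n by
        simpa using (conj_pow (a := x⁻¹) (b := petalHom W ![a₁, a₂] h) (i := n)).symm]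
    obtain ⟨d, hd⟩ := (hCE i _ hE).subword hy
    exact hblock y i d hd

end HypPaper
end
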